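/- arXiv:1911.01851 — 7 statements merged into one kernel-verified Lean document; each statement's English description precedes it below -/
import Mathlib

section
/- Let w be a nonempty word over a totally ordered alphabet Σ with Lyndon factorization CFL(w) = (ℓ1, …, ℓk). Suppose x is a factor of w of the form x = ℓ''_i ℓ_{i+1} ⋯ ℓ_{j-1} ℓ'_j, where 1 ≤ i < j ≤ k, ℓ''_i is a suffix of ℓ_i, ℓ'_j is a prefix of ℓ_j, the word ℓ''_i ℓ'_j is nonempty, and if j = i+1 then additionally ℓ''_i and ℓ'_j are both nonempty and ℓ''_i ℓ'_j ≠ ℓ_i ℓ_j. Then CFL(x) is the concatenation of the sequences CFL(ℓ''_i), (ℓ_{i+1}, …, ℓ_{j-1}) and CFL(ℓ'_j), where the first (resp. last) of these sequences is omitted if ℓ''_i (resp. ℓ'_j) is the empty word. -/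
/-!
Up to unfolding, `List.Lex (· < ·)` is Mathlib's linear order on `List α`, so `≺` is written `<`
in the helper lemmas.

Every word has a Lyndon factorization: split off the smallest nonempty suffix `m`, which is Lyndon
by minimality, and factor the rest by induction (`exists_cfl`). The factor `l` before `m` is not
below `m`: otherwise `l ≺ m ≺ l m`, so `m = l t` with `t ⪯ m`, although `m` is smaller than its
proper suffix `t`. This is applied to `ℓ''ᵢ` and `ℓ'ⱼ`;
the concatenation with the middle factors has the right product and consists of Lyndon words, so
only the order at the junctions matters. The last factor of `ℓ''ᵢ` is a suffix of the Lyndon word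
`ℓᵢ`, hence `⪰ ℓᵢ`, and the first factor of `ℓ'ⱼ` is a prefix of `ℓⱼ`, hence `⪯ ℓⱼ`. As
`ℓᵢ ⪰ ℓ_{i+1} ⪰ ⋯ ⪰ ℓⱼ`, both junctions are nonincreasing.
-/

open List

section Defs

variable {α : Type*} [LinearOrder α]

/-- The lexicographic order `x ≺ y` on words over the ordered alphabet `α`. -/
def lexLt (x y : List α) : Prop := List.Lex (· < ·) x y

/-- The inverse `<_in` of the letter order. -/
def invLt (a b : α) : Prop := b < a

/-- `x ≪ y` : `x ≺ y` and `x` is not a (proper) prefix of `y`. -/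
def lexLtLt (x y : List α) : Prop := lexLt x y ∧ ¬ x <+: y

/-- `w` is a Lyndon word with respect to the letter order `r`:
nonempty, primitive, and `≺ᵣ`-smaller than each of its proper nonempty suffixes. -/
def IsLyndonWith (r : α → α → Prop) (w : List α) : Prop :=
  w ≠ [] ∧ (∀ (u : List α) (n : ℕ), w = (List.replicate n u).flatten → n = 1) ∧
  ∀ s : List α, s ≠ [] → s ≠ w → s <:+ w → List.Lex r w s

/-- `L` is the Lyndon factorization of `w` with respect to the letter order `r`:
a nonempty sequence of Lyndon words, nonincreasing for `≺ᵣ`, whose product is `w`. -/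
def IsCFLWith (r : α → α → Prop) (w : List α) (L : List (List α)) : Prop :=
  L ≠ [] ∧ L.flatten = w ∧ (∀ l ∈ L, IsLyndonWith r l) ∧
  List.Chain' (fun x y => ¬ List.Lex r x y) L

/-- an anti-prenecklace: a prefix of a power of an anti-Lyndon word. -/
def IsAntiPrenecklace (z : List α) : Prop :=
  ∃ (l : List α) (k : ℕ), IsLyndonWith invLt l ∧ z <+: (List.replicate k l).flatten

/-- an inverse Lyndon word: each proper nonempty suffix is `≺`-smaller than `w`. -/
def IsInvLyndon (w : List α) : Prop :=
  w ≠ [] ∧ ∀ s : List α, s ≠ [] → s ≠ w → s <:+ w → lexLt s w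

/-- `z` is a border of `w`: a proper prefix and a suffix of `w`. -/
def IsBorder (z w : List α) : Prop := z <+: w ∧ z ≠ w ∧ z <:+ w

/-- `(p, pbar) ∈ Pref_bre(w)`: `p` is an inverse Lyndon word which is a nonempty proper
prefix of `w = p v` and `pbar` is its bounded right extension. -/
def IsBRE (p pbar w : List α) : Prop :=
  IsInvLyndon p ∧ p ≠ [] ∧ p ≠ w ∧
  (∃ v : List α, w = p ++ v ∧ pbar <+: v) ∧ pbar ≠ [] ∧
  IsInvLyndon pbar ∧
  (∀ z' : List α, z' ≠ [] → z' ≠ pbar → z' <+: pbar → IsInvLyndon (p ++ z')) ∧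
  ¬ IsInvLyndon (p ++ pbar) ∧
  lexLt p pbar ∧ ¬ p <+: pbar

/-- The canonical inverse Lyndon factorization `ICFL(w) = M`. -/
inductive IsICFL : List α → List (List α) → Prop
  | base (w : List α) : IsInvLyndon w → IsICFL w [w]
  | ext (w p pbar v m1 : List α) (ms : List (List α)) :
      ¬ IsInvLyndon w → IsBRE p pbar w → w = p ++ v →
      IsICFL v (m1 :: ms) → pbar <+: m1 → IsICFL w (p :: m1 :: ms)
  | grp (w p pbar v r : List α) (a b : α) (s m1 : List α) (ms : List (List α)) :
      ¬ IsInvLyndon w → IsBRE p pbar w → w = p ++ v →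
      p = r ++ a :: s → pbar = r ++ [b] → a < b →
      IsICFL v (m1 :: ms) → m1 <+: r → IsICFL w ((p ++ m1) :: ms)

/-- the longest common prefix of two words. -/
def lcp : List α → List α → List α
  | a :: x, b :: y => if a = b then a :: lcp x y else []
  | _, _ => []

end Defs

theorem cons_le_cons_iff_lex {α : Type*} [LinearOrder α] {a b : α} {l m : List α} :
    a :: l ≤ b :: m ↔ a < b ∨ a = b ∧ l ≤ m := by
  rw [← not_lt, ← not_lt, List.cons_lt_cons_iff]
  rcases lt_trichotomy a b with h | rfl | h
  · simp [h, h.le, h.ne']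
  · simp
  · simp [h, h.not_gt, h.ne']

theorem le_of_prefix {α : Type*} [LinearOrder α] {u v : List α} (h : u <+: v) : u ≤ v := by
  obtain ⟨t, rfl⟩ := h
  induction u with
  | nil => exact not_lt.mp (List.not_lt_nil _)
  | cons a u ih => exact cons_le_cons_iff_lex.mpr (Or.inr ⟨rfl, ih⟩)

theorem lt_of_append_lt_append {α : Type*} [LinearOrder α] {l u v : List α}
    (h : l ++ u < l ++ v) : u < v := by
  induction l with
  | nil => exact h
  | cons a l ih =>
    apply ih
    simpa [List.cons_lt_cons_iff] using h

theorem prefix_of_between {α : Type*} [LinearOrder α] {l m u : List α}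
    (h1 : l ≤ m) (h2 : m ≤ l ++ u) : l <+: m := by
  induction l generalizing m with
  | nil => exact List.nil_prefix
  | cons a l ih =>
    cases m with
    | nil => exact absurd h1 (not_le.mpr (List.nil_lt_cons _ _))
    | cons b m =>
      rw [List.cons_append] at h2
      rcases cons_le_cons_iff_lex.mp h1 with h3 | ⟨rfl, h3⟩
      · rcases cons_le_cons_iff_lex.mp h2 with h2 | ⟨rfl, h2⟩
        · exact absurd h3 (not_lt.mpr h2.le)
        · exact absurd h3 (lt_irrefl _)
      · rcases cons_le_cons_iff_lex.mp h2 with h2 | ⟨_, h2⟩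
        · exact absurd h2 (lt_irrefl _)
        · exact List.cons_prefix_cons.mpr ⟨rfl, ih h3 h2⟩

/-- Primitivity is automatic: in a proper power `uⁿ` the proper suffix `u` is also a prefix, so it
is smaller than `uⁿ`. -/
theorem isLyndon_of_suffix {α : Type*} [LinearOrder α] {w : List α} (h0 : w ≠ [])
    (h : ∀ s : List α, s ≠ [] → s ≠ w → s <:+ w → w < s) : IsLyndonWith (· < ·) w := by
  refine ⟨h0, fun u n hn => ?_, h⟩
  match n, hn with
  | 0, hn => simp at hn; exact absurd hn h0
  | 1, _ => rfl
  | n + 2, hn =>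
    exfalso
    have hu : u ≠ [] := by
      rintro rfl
      simp at hn
      exact h0 hn
    have hp : w = u ++ (List.replicate (n + 1) u).flatten := by
      rw [hn, List.replicate_succ, List.flatten_cons]
    have hs : w = (List.replicate (n + 1) u).flatten ++ u := by
      rw [hn, List.replicate_succ', List.flatten_concat]
    have hlt := h u hu (fun e => by
      have := congrArg List.length hp
      rw [← e, List.replicate_succ] at this
      simp at this
      exact hu this.1) ⟨_, hs.symm⟩
    exact absurd (le_of_prefix (⟨_, hp.symm⟩ : u <+: w)) (not_le.mpr hlt)

theorem exists_min_suffix {α : Type*} [LinearOrder α] {w : List α} (hw : w ≠ []) :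
    ∃ m : List α, m ≠ [] ∧ m <:+ w ∧ ∀ s : List α, s ≠ [] → s <:+ w → m ≤ s := by
  have hf : {s : List α | s ≠ [] ∧ s <:+ w}.Finite :=
    (List.finite_toSet w.tails).subset fun s hs => (List.mem_tails s w).mpr hs.2
  obtain ⟨m, hm, hmin⟩ := Set.exists_min_image _ id hf ⟨w, hw, List.suffix_refl w⟩
  exact ⟨m, hm.1, hm.2, fun s h1 h2 => hmin s ⟨h1, h2⟩⟩

/-- Existence of the Lyndon factorization, the empty word having the empty one. -/
theorem exists_cfl {α : Type*} [LinearOrder α] (w : List α) :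
    ∃ A : List (List α), A.flatten = w ∧ (∀ l ∈ A, IsLyndonWith (· < ·) l) ∧
      List.IsChain (fun x y : List α => ¬ x < y) A := by
  induction hn : w.length using Nat.strong_induction_on generalizing w with
  | _ n ih =>
  by_cases hw : w = []
  · exact ⟨[], by simp [hw]⟩
  obtain ⟨m, hm0, ⟨v, rfl⟩, hmin⟩ := exists_min_suffix hw
  have hmpos := List.length_pos_iff.mpr hm0
  obtain ⟨A, rfl, hA, hc⟩ := ih v.length (by simp at hn; omega) v rfl
  have hlyn : ∀ s : List α, s ≠ [] → s ≠ m → s <:+ m → m < s := fun s h1 h2 h3 =>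
    lt_of_le_of_ne (hmin s h1 (h3.trans (List.suffix_append _ _))) h2.symm
  refine ⟨A ++ [m], by simp, ?_, ?_⟩
  · intro l hl
    rcases List.mem_append.mp hl with hl | hl
    · exact hA l hl
    · rw [List.mem_singleton.mp hl]
      exact isLyndon_of_suffix hm0 hlyn
  · refine List.isChain_append.mpr ⟨hc, List.isChain_singleton _, ?_⟩
    intro l hl y hy
    obtain rfl : m = y := by simpa using hy
    intro hlt
    have hl0 : l ≠ [] := (hA l (List.mem_of_getLast? hl)).1
    obtain ⟨A', rfl⟩ : ∃ A', A = A' ++ [l] := by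
      obtain ⟨ys, h⟩ := List.getLast?_eq_some_iff.mp hl
      exact ⟨ys, h⟩
    have hle : m ≤ l ++ m := hmin _ (by simp [hl0]) ⟨A'.flatten, by simp⟩
    -- `l < m ≤ l ++ m` forces `l` to be a prefix of `m`, and cancelling `l` in `m ≤ l ++ m`
    -- gives a proper suffix of `m` that is not larger than `m`.
    obtain ⟨t, rfl⟩ : l <+: m := prefix_of_between hlt.le hle
    have ht0 : t ≠ [] := by
      rintro rfl
      simp at hlt
    have hne : t ≠ l ++ t := by simpa using hl0
    have h1 := hlyn t ht0 hne (List.suffix_append _ _)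
    have h2 : ¬ l ++ t < t := fun h => by
      rcases hle.lt_or_eq with h' | h'
      · exact absurd (lt_of_append_lt_append h') (not_lt.mpr h.le)
      · exact hne (List.append_cancel_left h')
    exact h2 h1

/-- Lemma `lem:compression-2`: the Lyndon factorization of a non-simple factor
`x = ℓ''ᵢ ℓ_{i+1} ⋯ ℓ_{j-1} ℓ'ⱼ` of `w` is obtained by concatenating `CFL(ℓ''ᵢ)`,
`(ℓ_{i+1}, …, ℓ_{j-1})` and `CFL(ℓ'ⱼ)` (indices `i`, `j` are 0-based here). -/
theorem stmt0 {α : Type*} [LinearOrder α] (w : List α) (hw : w ≠ [])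
    (L : List (List α)) (hCFL : IsCFLWith (· < ·) w L)
    (i j : ℕ) (hij : i < j) (hjk : j < L.length)
    (l''i l'j x : List α)
    (hsuf : l''i <:+ L[i]!) (hpre : l'j <+: L[j]!)
    (hx : x = l''i ++ ((L.drop (i+1)).take (j - (i+1))).flatten ++ l'j)
    (hne : l''i ++ l'j ≠ [])
    (hadj : j = i + 1 → l''i ≠ [] ∧ l'j ≠ [] ∧ l''i ++ l'j ≠ L[i]! ++ L[j]!) :
    ∃ A B : List (List α),
      (l''i = [] → A = []) ∧ (l''i ≠ [] → IsCFLWith (· < ·) l''i A) ∧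
      (l'j = [] → B = []) ∧ (l'j ≠ [] → IsCFLWith (· < ·) l'j B) ∧
      IsCFLWith (· < ·) x (A ++ (L.drop (i+1)).take (j - (i+1)) ++ B) := by
  obtain ⟨-, -, hLyn, hch⟩ := hCFL
  have hch' : List.IsChain (fun x y : List α => y ≤ x) L := by
    refine List.IsChain.imp (fun a b h => ?_) hch
    exact not_lt.mp h
  have hpw : List.Pairwise (fun x y : List α => y ≤ x) L := by
    have : IsTrans (List α) (fun x y : List α => y ≤ x) := ⟨fun a b c h1 h2 => h2.trans h1⟩
    exact List.isChain_iff_pairwise.mp hch'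
  have hil : i < L.length := hij.trans hjk
  rw [getElem!_pos L i hil] at hsuf
  rw [getElem!_pos L j hjk] at hpre
  obtain ⟨A, hAf, hAl, hAc⟩ := exists_cfl l''i
  obtain ⟨B, hBf, hBl, hBc⟩ := exists_cfl l'j
  have hA_empty : l''i = [] → A = [] := by
    intro h
    rw [h] at hAf
    refine List.eq_nil_iff_forall_not_mem.mpr fun a ha => (hAl a ha).1 ?_
    exact List.flatten_eq_nil_iff.mp hAf a ha
  have hB_empty : l'j = [] → B = [] := by
    intro h
    rw [h] at hBf
    refine List.eq_nil_iff_forall_not_mem.mpr fun a ha => (hBl a ha).1 ?_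
    exact List.flatten_eq_nil_iff.mp hBf a ha
  have hA_ne : l''i ≠ [] → A ≠ [] := by
    rintro h rfl
    exact h hAf.symm
  have hB_ne : l'j ≠ [] → B ≠ [] := by
    rintro h rfl
    exact h hBf.symm
  have hlast : ∀ a ∈ A.getLast?, L[i] ≤ a := by
    intro a ha
    obtain ⟨A', rfl⟩ := List.getLast?_eq_some_iff.mp ha
    have hs : a <:+ L[i] := by
      refine List.IsSuffix.trans ⟨A'.flatten, ?_⟩ hsuf
      rw [← hAf]
      simp
    by_cases e : a = L[i]
    · exact e.ge
    · exact le_of_lt ((hLyn _ (List.getElem_mem hil)).2.2 a (hAl a (by simp)).1 e hs)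
  have hhead : ∀ b ∈ B.head?, b ≤ L[j] := by
    intro b hb
    obtain ⟨B', rfl⟩ := List.head?_eq_some_iff.mp hb
    refine le_of_prefix (List.IsPrefix.trans ⟨B'.flatten, ?_⟩ hpre)
    rw [← hBf]
    simp
  set M := (L.drop (i+1)).take (j - (i+1)) with hM
  have hMc : List.IsChain (fun x y : List α => ¬ x < y) M :=
    (List.IsChain.drop hch (i+1)).take (j - (i+1))
  have hMb : ∀ m ∈ M, m ≤ L[i] ∧ L[j] ≤ m := by
    intro m hm
    obtain ⟨k, hk, rfl⟩ := List.mem_iff_getElem.mp hm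
    have hk' : k < j - (i+1) := by
      rw [hM, List.length_take] at hk
      omega
    have e : M[k] = L[i+1+k] := by
      simp [hM]
    rw [e]
    exact ⟨List.pairwise_iff_getElem.mp hpw _ _ _ _ (by omega),
      List.pairwise_iff_getElem.mp hpw _ _ _ _ (by omega)⟩
  have hji : L[j] ≤ L[i] := List.pairwise_iff_getElem.mp hpw _ _ _ _ hij
  refine ⟨A, B, hA_empty, fun h => ⟨hA_ne h, hAf, hAl, hAc⟩, hB_empty,
    fun h => ⟨hB_ne h, hBf, hBl, hBc⟩, ?_, ?_, ?_, ?_⟩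
  · intro h
    obtain ⟨h, hB⟩ := List.append_eq_nil_iff.mp h
    obtain ⟨hA, -⟩ := List.append_eq_nil_iff.mp h
    exact hne (by rw [← hAf, ← hBf, hA, hB]; rfl)
  · rw [hx, List.flatten_append, List.flatten_append, hAf, hBf]
  · intro l hl
    rcases List.mem_append.mp hl with hl | hl
    · rcases List.mem_append.mp hl with hl | hl
      · exact hAl l hl
      · exact hLyn l (List.mem_of_mem_drop (List.mem_of_mem_take hl))
    · exact hBl l hl
  · change List.IsChain (fun x y : List α => ¬ x < y) _
    refine List.isChain_append.mpr ⟨List.isChain_append.mpr ⟨hAc, hMc, ?_⟩, hBc, ?_⟩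
    · intro a ha m hm
      exact not_lt.mpr ((hMb m (List.mem_of_head? hm)).1.trans (hlast a ha))
    · intro c hc b hb
      refine not_lt.mpr ((hhead b hb).trans ?_)
      rw [Option.mem_def, List.getLast?_append, Option.or_eq_some_iff] at hc
      rcases hc with hc | ⟨-, hc⟩
      · exact (hMb c (List.mem_of_getLast? hc)).2
      · exact hji.trans (hlast c hc)
end

section
/- Let w be a nonempty word over a totally ordered alphabet Σ with CFL_in(w) = (ℓ1, …, ℓh), and let 1 ≤ r < s ≤ h be such that ℓ_{t+1} is a prefix of ℓ_t for every t with r ≤ t < s (a nonincreasing chain for the prefix order). Then every nonempty border x of y = ℓ_r ℓ_{r+1} ⋯ ℓ_s has the form x = ℓ_{t+1} ⋯ ℓ_s for some t with r ≤ t < s. Consequently, ℓ_s is a prefix of every nonempty border of ℓ_r ⋯ ℓ_s. -/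
/-!
Let `y = ℓ_r ⋯ ℓ_s`. A nonempty suffix `x` of `y` is either a product `ℓ_i ⋯ ℓ_s`, or it starts
with a proper nonempty suffix `v` of some `ℓ_i`. In the latter case, as `ℓ_i` is a prefix of `ℓ_r`
and hence of `y`, a border `x` would make `v` a prefix of `ℓ_i`; but a Lyndon word is smaller than
its proper suffix `v`, whereas no word is smaller than one of its own prefixes. So every nonempty
border is `ℓ_i ⋯ ℓ_s`, with `i ≠ r` because a border is a proper prefix, and it starts with `ℓ_i`,
of which `ℓ_s` is a prefix. See `not_lex_append_left` and `suffix_eq_drop_flatten`.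
-/

open List

theorem not_lex_append_left {α : Type*} {R : α → α → Prop} (hR : ∀ a, ¬ R a a) (v c : List α) :
    ¬ List.Lex R (v ++ c) v := by
  induction v with
  | nil => intro h; cases h
  | cons a v ih =>
    intro h
    cases h with
    | rel h => exact hR a h
    | cons h => exact ih h

/-- If all factors of `M` are Lyndon words and prefixes of `y`, then a nonempty suffix of the
product of `M` that is itself a prefix of `y` starts at the boundary of a factor. -/
theorem suffix_eq_drop_flatten {α : Type*} [LinearOrder α] {R : α → α → Prop} (hR : ∀ a, ¬ R a a)
    {x y : List α} (hx : x ≠ []) (hxy : x <+: y) (M : List (List α))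
    (hM : ∀ m ∈ M, IsLyndonWith R m ∧ m <+: y) (hsuf : x <:+ M.flatten) :
    ∃ i < M.length, x = (M.drop i).flatten := by
  induction M with
  | nil => exact absurd (by simpa using hsuf) hx
  | cons m M ih =>
    have ih' := ih fun k hk => hM k (List.mem_cons_of_mem _ hk)
    have lift : x <:+ M.flatten → ∃ i < (m :: M).length, x = ((m :: M).drop i).flatten := by
      intro h
      obtain ⟨i, hi, e⟩ := ih' h
      exact ⟨i + 1, by simpa using hi, by simpa using e⟩
    obtain ⟨u, hu⟩ := hsuf
    rw [List.flatten_cons, List.append_eq_append_iff] at hu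
    rcases hu with ⟨v, hv, hxv⟩ | ⟨c, -, hc⟩
    · by_cases hv0 : v = []
      · exact lift (by simp [hxv, hv0])
      by_cases hvm : v = m
      · exact ⟨0, by simp, by simp [hxv, hvm]⟩
      exfalso
      obtain ⟨hLyn, hmy⟩ := hM m List.mem_cons_self
      have hvs : v <:+ m := ⟨u, hv.symm⟩
      have hvy : v <+: y := List.IsPrefix.trans ⟨_, hxv.symm⟩ hxy
      obtain ⟨d, hd⟩ := List.prefix_of_prefix_length_le hvy hmy hvs.length_le
      have hlex := hLyn.2.2 v hv0 hvm hvs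
      rw [← hd] at hlex
      exact not_lex_append_left hR v d hlex
    · exact lift ⟨c, hc.symm⟩

/-- Proposition `bordo3`: every nonempty border of a nonincreasing chain (for the prefix
order) `ℓ_r ⋯ ℓ_s` of consecutive factors of `CFL_in(w)` has the form `ℓ_{t+1} ⋯ ℓ_s`;
consequently `ℓ_s` is a prefix of every such border (indices `r`, `s` are 0-based). -/
theorem stmt2 {α : Type*} [LinearOrder α] (w : List α) (hw : w ≠ [])
    (L : List (List α)) (hL : IsCFLWith invLt w L)
    (r s : ℕ) (hrs : r < s) (hsh : s < L.length)
    (hchain : ∀ t, r ≤ t → t < s → L[t+1]! <+: L[t]!)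
    (x : List α) (hx : x ≠ [])
    (hxb : IsBorder x (((L.drop r).take (s - r + 1)).flatten)) :
    (∃ t, r ≤ t ∧ t < s ∧ x = ((L.drop (t+1)).take (s - t)).flatten) ∧
    L[s]! <+: x := by
  obtain ⟨hpre, hne, hsuf⟩ := hxb
  have chain : ∀ i j, r ≤ i → i ≤ j → j ≤ s → L[j]! <+: L[i]! := by
    intro i j hi hij
    induction j, hij using Nat.le_induction with
    | base => exact fun _ => List.prefix_rfl
    | succ j hj ih =>
      exact fun hjs => (hchain j (by omega) (by omega)).trans (ih (by omega))
  -- A product of consecutive factors starts with its first factor.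
  have first : ∀ i k, i < L.length → 0 < k → L[i]! <+: ((L.drop i).take k).flatten := by
    intro i k hi hk
    obtain ⟨k, rfl⟩ := Nat.exists_eq_succ_of_ne_zero hk.ne'
    rw [List.drop_eq_getElem_cons hi, List.take_succ_cons, List.flatten_cons,
      getElem!_pos L i hi]
    exact List.prefix_append _ _
  obtain ⟨i, hi, e⟩ := suffix_eq_drop_flatten (R := invLt) (fun a => lt_irrefl a) hx hpre
    ((L.drop r).take (s - r + 1)) (by
      intro m hm
      obtain ⟨k, hk, rfl⟩ := List.mem_iff_getElem.1 hm
      simp only [List.length_take, List.length_drop] at hk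
      have hkL : r + k < L.length := by omega
      rw [List.getElem_take, List.getElem_drop]
      refine ⟨hL.2.2.1 _ (List.getElem_mem _), ?_⟩
      have h := chain r (r + k) le_rfl (by omega) (by omega)
      rw [getElem!_pos L _ hkL] at h
      exact h.trans (first r _ (by omega) (by omega))) hsuf
  simp only [List.length_take, List.length_drop] at hi
  have hi0 : i ≠ 0 := by
    rintro rfl
    exact hne e
  rw [List.drop_take, List.drop_drop] at e
  refine ⟨⟨r + i - 1, by omega, by omega, ?_⟩, ?_⟩
  · rw [e, show r + i - 1 + 1 = r + i by omega, show s - (r + i - 1) = s - r + 1 - i by omega]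
  · rw [e]
    exact (chain (r + i) s (by omega) (by omega) le_rfl).trans
      (first (r + i) _ (by omega) (by omega))
end

section
/- Let w be a nonempty word over a totally ordered alphabet Σ that is not an inverse Lyndon word, and write CFL_in(w) = (ℓ1^{n1}, …, ℓh^{nh}) with h > 0, n1, …, nh ≥ 1 and ℓ1, …, ℓh pairwise distinct anti-Lyndon words. For all nonempty words z and letters b ∈ Σ such that z is an anti-prenecklace, z b is not an anti-prenecklace, and z b is a prefix of w, there is an integer g with 1 ≤ g ≤ h such that z b = (u1 v1)^{n1} ⋯ (u_g v_g)^{n_g} u_g b, where for each j with 1 ≤ j ≤ g one has ℓ_j = u_j v_j with v_j = a_j v'_j for a letter a_j < b, and u_g b is an anti-prenecklace. -/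
/-!
Everything is read in the inverse letter order, where anti-Lyndon words are ordinary Lyndon words;
the proof follows Duval's algorithm. A nonempty anti-prenecklace is `z = l ^ k u` with `k ≥ 1`, `l`
anti-Lyndon and `l = u a v'` (`exists_pow_of_prenecklace`). If `b = a` then `z b` is a prefix of
`l ^ (k + 1)`, and if `b < a` then `z b` is itself anti-Lyndon (`isLyndon_duval`); so when `z b` is
not an anti-prenecklace, `a < b`. In that case the factorization of any word with prefix `z b`
begins with exactly `k` copies of `l` and continues with the factorization of the remaining word,
which starts with `u b` (`cfl_strip`). If `u b` is an anti-prenecklace, this is the claim with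
`g = 1`; otherwise the same argument applies to the shorter word `u` (`bordo_aux`).
-/

open List

section Aux

variable {α : Type*} [LinearOrder α]

/-! ### Strict comparison at a mismatch -/

/-- The relation `x ≪ y` for the inverse letter order: at the first position where `x` and `y`
differ, both have a letter, and that of `x` is the larger one in the order of `α`. In particular
neither word is a prefix of the other. -/
def SLt : List α → List α → Prop
  | a :: x, b :: y => b < a ∨ a = b ∧ SLt x y
  | _, _ => False

@[simp] theorem sLt_nil_left (y : List α) : ¬ SLt [] y := by simp [SLt]

@[simp] theorem sLt_nil_right (x : List α) : ¬ SLt x [] := by cases x <;> simp [SLt]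

@[simp] theorem sLt_cons (a b : α) (x y : List α) :
    SLt (a :: x) (b :: y) ↔ b < a ∨ a = b ∧ SLt x y := by simp [SLt]

theorem SLt.append {x y : List α} (hxy : SLt x y) (p q : List α) : SLt (x ++ p) (y ++ q) := by
  induction x generalizing y with
  | nil => simp at hxy
  | cons a x ih =>
    cases y with
    | nil => simp at hxy
    | cons b y =>
      simp only [sLt_cons, List.cons_append] at hxy ⊢
      exact hxy.imp_right fun hh => ⟨hh.1, ih hh.2⟩

theorem SLt.mono {x y x' y' : List α} (hxy : SLt x y) (hx : x <+: x') (hy : y <+: y') :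
    SLt x' y' := by
  obtain ⟨p, rfl⟩ := hx
  obtain ⟨q, rfl⟩ := hy
  exact hxy.append p q

@[simp] theorem sLt_append_left (p x y : List α) : SLt (p ++ x) (p ++ y) ↔ SLt x y := by
  induction p with
  | nil => rfl
  | cons a p ih => simp [ih]

theorem SLt.trans {x y z : List α} (hxy : SLt x y) (hyz : SLt y z) : SLt x z := by
  induction x generalizing y z with
  | nil => simp at hxy
  | cons a x ih =>
    cases y with
    | nil => simp at hxy
    | cons b y =>
      cases z with
      | nil => simp at hyz
      | cons c z =>
        simp only [sLt_cons] at hxy hyz ⊢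
        rcases hxy with h1 | ⟨rfl, h1⟩ <;> rcases hyz with h2 | ⟨rfl, h2⟩
        · exact Or.inl (h2.trans h1)
        · exact Or.inl h1
        · exact Or.inl h2
        · exact Or.inr ⟨rfl, ih h1 h2⟩

theorem sLt_irrefl (x : List α) : ¬ SLt x x := by
  induction x with
  | nil => simp
  | cons a x ih => simp [ih]

theorem SLt.asymm {x y : List α} (hxy : SLt x y) (hyx : SLt y x) : False :=
  sLt_irrefl x (hxy.trans hyx)

theorem SLt.not_prefix_of {x y : List α} (hxy : SLt x y) : ¬ x <+: y := fun hp =>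
  sLt_irrefl y (hxy.mono hp (List.prefix_refl y))

theorem SLt.not_prefix_rev {x y : List α} (hxy : SLt x y) : ¬ y <+: x := fun hp =>
  sLt_irrefl x (hxy.mono (List.prefix_refl x) hp)

theorem lex_iff (x y : List α) :
    List.Lex invLt x y ↔ SLt x y ∨ (x <+: y ∧ x ≠ y) := by
  induction x generalizing y with
  | nil =>
    cases y with
    | nil => simp
    | cons b y => simp
  | cons a x ih =>
    cases y with
    | nil => simp
    | cons b y =>
      rw [List.cons_lex_cons_iff, ih]
      simp only [sLt_cons, List.cons_prefix_cons, ne_eq, List.cons.injEq, invLt]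
      tauto

theorem sLt_trichotomy (x y : List α) : SLt x y ∨ SLt y x ∨ x <+: y ∨ y <+: x := by
  induction x generalizing y with
  | nil => simp
  | cons a x ih =>
    cases y with
    | nil => simp
    | cons b y =>
      simp only [sLt_cons, List.cons_prefix_cons]
      rcases lt_trichotomy a b with h1 | rfl | h1
      · exact Or.inr (Or.inl (Or.inl h1))
      · rcases ih y with h2 | h2 | h2 | h2 <;> simp [h2]
      · exact Or.inl (Or.inl h1)

theorem not_lex {x y : List α} (hxy : ¬ List.Lex invLt x y) : SLt y x ∨ y <+: x := by
  rw [lex_iff] at hxy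
  push Not at hxy
  rcases sLt_trichotomy x y with h1 | h1 | h1 | h1
  · exact absurd h1 hxy.1
  · exact Or.inl h1
  · exact Or.inr (hxy.2 h1 ▸ List.prefix_refl x)
  · exact Or.inr h1

theorem not_lex_iff {x y : List α} : ¬ List.Lex invLt x y ↔ SLt y x ∨ y <+: x := by
  refine ⟨not_lex, fun h1 h2 => ?_⟩
  rw [lex_iff] at h2
  rcases h1 with h1 | h1 <;> rcases h2 with h2 | h2
  · exact h1.asymm h2
  · exact h1.not_prefix_rev h2.1
  · exact h2.not_prefix_rev h1
  · exact h2.2 (h2.1.eq_of_length_le h1.length_le)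

theorem sLt_or_prefix_of_sLt {x l y : List α} (hx : x <+: l) (hly : SLt l y) :
    SLt x y ∨ x <+: y := by
  rcases sLt_trichotomy x y with h1 | h1 | h1 | h1
  · exact Or.inl h1
  · exact (hly.asymm (h1.mono (List.prefix_refl y) hx)).elim
  · exact Or.inr h1
  · exact (hly.not_prefix_rev (h1.trans hx)).elim

theorem not_lex_trans {x y z : List α} (h1 : ¬ List.Lex invLt x y) (h2 : ¬ List.Lex invLt y z) :
    ¬ List.Lex invLt x z := by
  rw [not_lex_iff] at *
  rcases h1 with h1 | h1 <;> rcases h2 with h2 | h2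
  · exact Or.inl (h2.trans h1)
  · exact sLt_or_prefix_of_sLt h2 h1
  · exact Or.inl (h2.mono (List.prefix_refl z) h1)
  · exact Or.inr (h2.trans h1)

/-! ### Anti-Lyndon words -/

/-- A proper suffix of a Lyndon word is too short for the word to be a prefix of it, so the
comparison is decided by a mismatch. -/
theorem IsLyndonWith.sLt {l p s : List α} (hl : IsLyndonWith invLt l) (he : l = p ++ s)
    (hp : p ≠ []) (hs : s ≠ []) : SLt l s := by
  have hlen : s.length < l.length := by
    have := List.length_pos_of_ne_nil hp
    simp only [he, List.length_append]
    omega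
  have h1 := hl.2.2 s hs (fun h => by simp [h] at hlen) ⟨p, he.symm⟩
  rcases (lex_iff _ _).1 h1 with h2 | h2
  · exact h2
  · have := h2.1.length_le
    omega

theorem isLyndon_of_sLt {l : List α} (hne : l ≠ [])
    (hl : ∀ p s, l = p ++ s → p ≠ [] → s ≠ [] → SLt l s) : IsLyndonWith invLt l := by
  refine ⟨hne, ?_, ?_⟩
  · intro u n he
    match n with
    | 0 => simp at he; exact (hne he).elim
    | 1 => rfl
    | n + 2 =>
      -- `u` would be both a prefix and a proper suffix of `l`.
      exfalso
      have hu : u ≠ [] := by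
        rintro rfl
        simp at he
        exact hne he
      have hs : l = (List.replicate (n + 1) u).flatten ++ u := by
        rw [he, List.replicate_succ' (n := n + 1)]
        simp
      have hp : u <+: l := by
        rw [he, List.replicate_succ, List.flatten_cons]
        exact List.prefix_append _ _
      refine (hl _ _ hs ?_ hu).not_prefix_rev hp
      simp [List.replicate_succ, hu]
  · rintro s hs hsl ⟨p, he⟩
    refine (lex_iff _ _).2 (Or.inl (hl p s he.symm ?_ hs))
    rintro rfl
    exact hsl (by simpa using he)

theorem isLyndon_singleton (b : α) : IsLyndonWith invLt [b] := by
  refine isLyndon_of_sLt (by simp) fun p s he hp hs => ?_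
  have h1 := List.length_pos_of_ne_nil hp
  have h2 := List.length_pos_of_ne_nil hs
  have h3 := congrArg List.length he
  simp at h3
  omega

theorem antiPrenecklace_of_lyndon {l : List α} (hl : IsLyndonWith invLt l) :
    IsAntiPrenecklace l := ⟨l, 1, hl, by simp⟩

theorem IsAntiPrenecklace.mono {x z : List α} (hz : IsAntiPrenecklace z) (hx : x <+: z) :
    IsAntiPrenecklace x := by
  obtain ⟨l, k, hl, hk⟩ := hz
  exact ⟨l, k, hl, hx.trans hk⟩

theorem not_sLt_pow (l : List α) (i j : ℕ) :
    ¬ SLt (List.replicate i l).flatten (List.replicate j l).flatten := by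
  induction i generalizing j with
  | zero => simp
  | succ i ih =>
    cases j with
    | zero => simp
    | succ j => simpa [List.replicate_succ] using ih j

/-- No suffix of a power of an anti-Lyndon word lies below a power of that word in the sense of
`SLt`. -/
theorem not_sLt_suffix_pow {l : List α} (hl : IsLyndonWith invLt l) (m M : ℕ) (p s : List α)
    (he : (List.replicate m l).flatten = p ++ s) : ¬ SLt s (List.replicate M l).flatten := by
  induction m generalizing p s with
  | zero =>
    simp at he
    simp [he]
  | succ m ih =>
    rw [List.replicate_succ, List.flatten_cons, List.append_eq_append_iff] at he
    rcases he with ⟨p', -, h2⟩ | ⟨t, h1, h2⟩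
    · exact ih p' s h2
    · by_cases ht : t = []
      · subst ht
        exact ih [] s (by simpa using h2.symm)
      by_cases hp : p = []
      · subst hp
        have : s = (List.replicate (m + 1) l).flatten := by
          rw [List.replicate_succ, List.flatten_cons, h2, h1]
          simp
        rw [this]
        exact not_sLt_pow l _ _
      · have h3 := hl.sLt h1 hp ht
        intro h4
        cases M with
        | zero => simp at h4
        | succ M =>
          refine h4.asymm (h3.mono ?_ ?_)
          · rw [List.replicate_succ, List.flatten_cons]
            exact List.prefix_append _ _
          · rw [h2]
            exact List.prefix_append _ _

/-- Duval's extension step: reading, after `l ^ k u`, a letter that exceeds the expected letter `a`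
in the inverse order produces an anti-Lyndon word. -/
theorem isLyndon_duval {l u v : List α} {a c : α} (hl : IsLyndonWith invLt l)
    (he : l = u ++ a :: v) (hc : c < a) (k : ℕ) (hk : 1 ≤ k) :
    IsLyndonWith invLt ((List.replicate k l).flatten ++ u ++ [c]) := by
  -- A suffix starting inside the tail `u c` already lies strictly above `l`.
  have tail : ∀ p s, u ++ [c] = p ++ s → s ≠ [] → SLt l s := by
    intro p s hps hs
    obtain ⟨t, d, rfl⟩ := List.eq_nil_or_concat' s |>.resolve_left hs
    rw [← List.append_assoc] at hps
    obtain ⟨h1, h2⟩ := List.append_inj' hps rfl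
    obtain rfl : c = d := by simpa using h2
    have h3 : SLt (t ++ a :: v) (t ++ [c]) := by simp [hc]
    by_cases hp : p = []
    · subst hp
      rw [he, h1]
      simpa using h3
    · refine (hl.sLt (p := p) (s := t ++ a :: v) ?_ hp (by simp)).trans h3
      rw [he, h1]
      simp
  -- A nonempty suffix of `l ^ i u c` starting strictly inside a block `l` already lies above `l`.
  -- One starting at a block boundary is `l ^ i' u c` with `i' < j`, so it exceeds `l ^ j` at `c`,
  -- which faces the letter `a` of the next copy of `l`; hence the condition `p ≠ [] ∨ i < j`.
  have key : ∀ i j, i ≤ j → 1 ≤ j → ∀ p s,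
      (List.replicate i l).flatten ++ u ++ [c] = p ++ s → s ≠ [] → (p ≠ [] ∨ i < j) →
      SLt (List.replicate j l).flatten s := by
    intro i
    induction i with
    | zero =>
      intro j _ hj p s hps hs _
      obtain ⟨j, rfl⟩ : ∃ j', j = j' + 1 := ⟨j - 1, by omega⟩
      rw [List.replicate_succ, List.flatten_cons]
      refine (tail p s (by simpa using hps) hs).mono (List.prefix_append _ _)
        (List.prefix_refl _)
    | succ i ih =>
      intro j hij hj p s hps hs hor
      have hps' : l ++ ((List.replicate i l).flatten ++ u ++ [c]) = p ++ s := by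
        rw [← hps]
        simp [List.replicate_succ]
      rw [List.append_eq_append_iff] at hps'
      rcases hps' with ⟨p', -, h2⟩ | ⟨t, h1, h2⟩
      · exact ih j (by omega) hj p' s h2 hs (Or.inr (by omega))
      · by_cases ht : t = []
        · subst ht
          exact ih j (by omega) hj [] s (by simpa using h2.symm) hs (Or.inr (by omega))
        obtain ⟨j, rfl⟩ : ∃ j', j = j' + 1 := ⟨j - 1, by omega⟩
        rw [List.replicate_succ, List.flatten_cons]
        by_cases hp : p = []
        · subst hp
          have hij' : i + 1 < j + 1 := hor.resolve_left (by simp)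
          obtain rfl : l = t := by simpa using h1
          rw [h2, sLt_append_left]
          exact ih j (by omega) (by omega) [] _ (by simp) (by simp) (Or.inr (by omega))
        · exact (hl.sLt h1 hp ht).mono (List.prefix_append _ _)
            (h2 ▸ List.prefix_append _ _)
  refine isLyndon_of_sLt (by simp) fun p s hps hp hs => ?_
  refine (key k k le_rfl hk p s hps hs (Or.inl hp)).mono ?_ (List.prefix_refl s)
  rw [List.append_assoc]
  exact List.prefix_append _ _

theorem not_prenecklace {l u v : List α} {a c : α}
    (he : l = u ++ a :: v) (hc : a < c) (k : ℕ) (hk : 1 ≤ k) :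
    ¬ IsAntiPrenecklace ((List.replicate k l).flatten ++ u ++ [c]) := by
  rintro ⟨L, M, hL, q, hq⟩
  obtain ⟨k, rfl⟩ : ∃ k', k = k' + 1 := ⟨k - 1, by omega⟩
  refine not_sLt_suffix_pow hL M M ((List.replicate (k + 1) l).flatten) (u ++ [c] ++ q)
    (by rw [← hq]; simp) ?_
  rw [← hq, List.replicate_succ, List.flatten_cons]
  nth_rw 1 [he]
  simp [hc]

/-- A nonempty anti-prenecklace is `l ^ k u` with `l` anti-Lyndon, `u` a proper prefix of `l`, and,
which is the point, at least one full copy of `l`. -/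
theorem exists_pow_of_prenecklace (z : List α) (hz : z ≠ []) (hp : IsAntiPrenecklace z) :
    ∃ (l : List α) (k : ℕ) (u : List α) (a : α) (v : List α), IsLyndonWith invLt l ∧ 1 ≤ k ∧
      l = u ++ a :: v ∧ z = (List.replicate k l).flatten ++ u := by
  induction z using List.reverseRecOn with
  | nil => exact (hz rfl).elim
  | append_singleton z c ih =>
    -- A Lyndon word is its own first power, with empty remainder.
    have lyn : ∀ x : List α, IsLyndonWith invLt x →
        ∃ (l : List α) (k : ℕ) (u : List α) (a : α) (v : List α), IsLyndonWith invLt l ∧ 1 ≤ k ∧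
          l = u ++ a :: v ∧ x = (List.replicate k l).flatten ++ u := by
      intro x hx
      obtain ⟨a, v, rfl⟩ := List.exists_cons_of_ne_nil hx.1
      exact ⟨a :: v, 1, [], a, v, hx, le_rfl, by simp, by simp⟩
    by_cases hz0 : z = []
    · subst hz0
      exact lyn _ (isLyndon_singleton c)
    obtain ⟨l, k, u, a, v, hl, hk, he, rfl⟩ := ih hz0 (hp.mono (List.prefix_append _ _))
    rcases lt_trichotomy a c with hac | rfl | hac
    · exact (not_prenecklace he hac k hk hp).elim
    · cases v with
      | nil =>
        obtain ⟨d, w, hd⟩ := List.exists_cons_of_ne_nil hl.1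
        exact ⟨l, k + 1, [], d, w, hl, by omega, hd, by
          simp [List.replicate_succ' (n := k), he]⟩
      | cons d v =>
        exact ⟨l, k, u ++ [a], d, v, hl, hk, by simp [he], by simp⟩
    · exact lyn _ (isLyndon_duval hl he hac k hk)

/-! ### The anti-Lyndon factorization -/

/-- The last factor touched by a nonempty prefix `t` of `L.flatten` meets `t` in a nonempty word
`p`, which is a suffix of `t` and a prefix of that factor. -/
theorem exists_factor_of_prefix_flatten (L : List (List α)) (t : List α) (ht : t ≠ [])
    (hp : t <+: L.flatten) : ∃ x ∈ L, ∃ p, p ≠ [] ∧ p <+: x ∧ p <:+ t := by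
  induction L generalizing t with
  | nil => simp at hp; exact (ht hp).elim
  | cons x L ih =>
    obtain ⟨q, hq⟩ := hp
    rw [List.flatten_cons, List.append_eq_append_iff] at hq
    rcases hq with ⟨c, h1, -⟩ | ⟨c, h1, h2⟩
    · exact ⟨x, by simp, t, ht, h1 ▸ List.prefix_append _ _, List.suffix_refl _⟩
    · by_cases hc : c = []
      · subst hc
        simp only [List.append_nil] at h1
        exact ⟨x, by simp, t, ht, h1 ▸ List.prefix_refl _, List.suffix_refl _⟩
      · obtain ⟨x', hx', p, hp0, hp1, hp2⟩ := ih c hc (h2 ▸ List.prefix_append _ _)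
        exact ⟨x', by simp [hx'], p, hp0, hp1, hp2.trans (h1 ▸ List.suffix_append _ _)⟩

/-- The first Lyndon factor is `l` as soon as the word is `l W` with `l` Lyndon and `W ≪ l W`:
a longer first factor `x = l c` would satisfy `x ≪ c`, whence `l W ≪ W`; a shorter one would be
followed by a factor beginning with a proper suffix of `l`, hence greater than `x`. -/
theorem cfl_head {l x W : List α} {L : List (List α)} (hl : IsLyndonWith invLt l)
    (hx : IsLyndonWith invLt x) (hL : ∀ y ∈ L, ¬ List.Lex invLt x y)
    (he : x ++ L.flatten = l ++ W) (hW : SLt W (l ++ W)) : x = l := by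
  have he' := he
  rw [List.append_eq_append_iff] at he'
  rcases he' with ⟨c, h1, h2⟩ | ⟨c, h1, h2⟩
  · by_contra hne
    have hc : c ≠ [] := by
      rintro rfl
      exact hne (by simpa using h1.symm)
    obtain ⟨y, hy, p, hp0, hp1, t, ht⟩ :=
      exists_factor_of_prefix_flatten L c hc (h2 ▸ List.prefix_append _ _)
    have hlp : SLt l p := hl.sLt (p := x ++ t) (by rw [h1, ← ht]; simp) (by simp [hx.1]) hp0
    have hly : SLt l y := hlp.mono (List.prefix_refl l) hp1
    have hxl : x <+: l := h1 ▸ List.prefix_append _ _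
    refine hL y hy ((lex_iff _ _).2 ?_)
    refine (sLt_or_prefix_of_sLt hxl hly).imp_right fun h3 => ⟨h3, ?_⟩
    rintro rfl
    exact hly.not_prefix_rev hxl
  · by_cases hc : c = []
    · simpa [hc] using h1
    · have h3 := (hx.sLt h1 hl.1 hc).append L.flatten L.flatten
      rw [he, ← h2] at h3
      exact (h3.asymm hW).elim

/-- The factorization of `l ^ k R` with `R ≪ l` consists of exactly `k` copies of `l`, followed by
a factorization of `R` in which `l` does not occur. -/
theorem cfl_strip {l R : List α} (hl : IsLyndonWith invLt l) (hR : SLt R l) (k : ℕ)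
    (L : List (List α)) (hLyn : ∀ x ∈ L, IsLyndonWith invLt x)
    (hP : L.Pairwise fun x y => ¬ List.Lex invLt x y)
    (he : L.flatten = (List.replicate k l).flatten ++ R) :
    ∃ L', L = List.replicate k l ++ L' ∧ L'.flatten = R ∧ l ∉ L' := by
  induction k generalizing L with
  | zero =>
    refine ⟨L, by simp, by simpa using he, fun hmem => ?_⟩
    have he' : L.flatten = R := by simpa using he
    cases L with
    | nil => simp at hmem
    | cons x L =>
      have hxR : x <+: R := by
        rw [← he', List.flatten_cons]
        exact List.prefix_append _ _
      have h1 : SLt l x ∨ l <+: x := by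
        rcases List.mem_cons.1 hmem with rfl | h2
        · exact Or.inr (List.prefix_refl _)
        · exact not_lex ((List.pairwise_cons.1 hP).1 l h2)
      rcases h1 with h1 | h1
      · exact hR.asymm (h1.mono (List.prefix_refl _) hxR)
      · exact hR.not_prefix_rev (h1.trans hxR)
  | succ k ih =>
    have he' : L.flatten = l ++ ((List.replicate k l).flatten ++ R) := by
      rw [he, List.replicate_succ]
      simp
    cases L with
    | nil =>
      simp at he'
      exact (hl.1 he'.1).elim
    | cons x L =>
      have hP' := List.pairwise_cons.1 hP
      rw [List.flatten_cons] at he'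
      have hW : SLt ((List.replicate k l).flatten ++ R)
          (l ++ ((List.replicate k l).flatten ++ R)) := by
        have h1 : l ++ ((List.replicate k l).flatten ++ R)
            = (List.replicate k l).flatten ++ (l ++ R) := by
          rw [← List.append_assoc, ← List.append_assoc, ← List.flatten_cons,
            ← List.replicate_succ, List.replicate_succ']
          simp
        rw [h1, sLt_append_left]
        exact hR.mono (List.prefix_refl _) (List.prefix_append _ _)
      obtain rfl : x = l := cfl_head hl (hLyn x (by simp)) hP'.1 he' hW
      obtain ⟨L', h1, h2, h3⟩ := ih L (fun y hy => hLyn y (by simp [hy])) hP'.2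
        (List.append_cancel_left he')
      exact ⟨L', by simp [List.replicate_succ, h1], h2, h3⟩

theorem replicate_append_inj {β : Type*} [DecidableEq β] {l l' : β} {k m : ℕ} {L R : List β}
    (hk : 1 ≤ k) (hm : 1 ≤ m) (hL : l ∉ L) (hR : l' ∉ R)
    (he : List.replicate m l' ++ R = List.replicate k l ++ L) : l' = l ∧ m = k ∧ R = L := by
  have h1 : l' = l := by
    obtain ⟨k, rfl⟩ : ∃ k', k = k' + 1 := ⟨k - 1, by omega⟩
    obtain ⟨m, rfl⟩ : ∃ m', m = m' + 1 := ⟨m - 1, by omega⟩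
    simp only [List.replicate_succ, List.cons_append, List.cons.injEq] at he
    exact he.1
  subst h1
  have h2 : m = k := by
    have := congrArg (List.count l') he
    simpa [List.count_eq_zero_of_not_mem hL, List.count_eq_zero_of_not_mem hR] using this
  subst h2
  exact ⟨rfl, rfl, List.append_cancel_left he⟩

/-- The list of factors `ℓ₁, …, ℓ₁, …, ℓ_g, …, ℓ_g`, where `ℓ_j` occurs `n_j` times. -/
abbrev blocks (ℓ : ℕ → List α) (n : ℕ → ℕ) (g : ℕ) : List (List α) :=
  ((List.range g).map (fun j => List.replicate (n (j+1)) (ℓ (j+1)))).flatten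

theorem blocks_succ (ℓ : ℕ → List α) (n : ℕ → ℕ) (g : ℕ) :
    blocks ℓ n (g + 1) = List.replicate (n 1) (ℓ 1) ++
      blocks (fun j => ℓ (j + 1)) (fun j => n (j + 1)) g := by
  simp [blocks, List.range_succ_eq_map, Function.comp_def]

theorem mem_blocks {ℓ : ℕ → List α} {n : ℕ → ℕ} {g : ℕ} {x : List α} (hx : x ∈ blocks ℓ n g) :
    ∃ j, 1 ≤ j ∧ j ≤ g ∧ x = ℓ j := by
  simp only [List.mem_flatten, List.mem_map, List.mem_range] at hx
  obtain ⟨_, ⟨j, hj, rfl⟩, hx⟩ := hx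
  exact ⟨j + 1, by omega, by omega, List.eq_of_mem_replicate hx⟩

/-- Induction on a bound `N` for the length of `z`: once the block `ℓ₁ ^ n₁` is removed, the
remaining word begins with `u b`, where `u` is shorter than `z`. -/
theorem bordo_aux (N : ℕ) : ∀ (z : List α) (b : α) (y : List α) (h : ℕ) (ℓ : ℕ → List α)
    (n : ℕ → ℕ), z.length ≤ N → (∀ j, 1 ≤ j → j ≤ h → 1 ≤ n j) →
    (∀ j1 j2, 1 ≤ j1 → j1 ≤ h → 1 ≤ j2 → j2 ≤ h → j1 ≠ j2 → ℓ j1 ≠ ℓ j2) →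
    (∀ x ∈ blocks ℓ n h, IsLyndonWith invLt x) →
    (blocks ℓ n h).Pairwise (fun x y => ¬ List.Lex invLt x y) →
    (blocks ℓ n h).flatten = z ++ b :: y → z ≠ [] →
    IsAntiPrenecklace z → ¬ IsAntiPrenecklace (z ++ [b]) →
    ∃ g, 1 ≤ g ∧ g ≤ h ∧ ∃ u : ℕ → List α,
      (∀ j, 1 ≤ j → j ≤ g → ∃ (a : α) (v' : List α), ℓ j = u j ++ a :: v' ∧ a < b) ∧
      z ++ [b] = (blocks ℓ n g).flatten ++ u g ++ [b] ∧
      IsAntiPrenecklace (u g ++ [b]) := by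
  induction N with
  | zero =>
    intro z b y h ℓ n hN _ _ _ _ _ hz
    exact (hz (List.length_eq_zero_iff.1 (by omega))).elim
  | succ N ih =>
    intro z b y h ℓ n hN hn hdist hLyn hP he hz hzp hzb
    obtain ⟨l, k, u, a, v, hl, hk, hluv, rfl⟩ := exists_pow_of_prenecklace z hz hzp
    have hab : a < b := by
      rcases lt_trichotomy a b with h1 | rfl | h1
      · exact h1
      · refine (hzb ⟨l, k + 1, hl, v, ?_⟩).elim
        rw [List.replicate_succ']
        simp [hluv]
      · exact (hzb (antiPrenecklace_of_lyndon (isLyndon_duval hl hluv h1 k hk))).elim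
    have hR : SLt (u ++ b :: y) l := by
      rw [hluv, sLt_append_left]
      simp [hab]
    obtain ⟨L', hL1, hL2, hL3⟩ := cfl_strip hl hR k _ hLyn hP (by rw [he]; simp)
    obtain ⟨h, rfl⟩ : ∃ h', h = h' + 1 := by
      refine ⟨h - 1, ?_⟩
      have : h ≠ 0 := by
        rintro rfl
        simp [blocks] at he
      omega
    rw [blocks_succ] at hL1
    obtain ⟨h1, h2, h3⟩ := replicate_append_inj hk (hn 1 le_rfl (by omega)) hL3 (by
      intro hmem
      obtain ⟨j, hj1, hj2, hj3⟩ := mem_blocks hmem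
      exact hdist 1 (j + 1) le_rfl (by omega) (by omega) (by omega) (by omega) hj3) hL1
    by_cases hub : IsAntiPrenecklace (u ++ [b])
    · refine ⟨1, le_rfl, by omega, fun _ => u, ?_, ?_, hub⟩
      · intro j hj1 hj2
        obtain rfl : j = 1 := by omega
        exact ⟨a, v, h1.trans hluv, hab⟩
      · rw [blocks_succ, h1, h2]
        simp [blocks]
    · have hu : u ≠ [] := by
        rintro rfl
        exact hub (antiPrenecklace_of_lyndon (isLyndon_singleton b))
      have hup : IsAntiPrenecklace u :=
        (antiPrenecklace_of_lyndon hl).mono (hluv ▸ List.prefix_append _ _)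
      have hlen : u.length ≤ N := by
        obtain ⟨k, rfl⟩ : ∃ k', k = k' + 1 := ⟨k - 1, by omega⟩
        have := List.length_pos_of_ne_nil hl.1
        rw [List.replicate_succ, List.flatten_cons] at hN
        simp only [List.length_append] at hN
        omega
      rw [blocks_succ] at hLyn hP
      obtain ⟨g, hg1, hg2, u', hu1, hu2, hu3⟩ := ih u b y h (fun j => ℓ (j + 1))
        (fun j => n (j + 1)) hlen (fun j _ _ => hn (j + 1) (by omega) (by omega))
        (fun j1 j2 _ _ _ _ hne => hdist (j1 + 1) (j2 + 1) (by omega) (by omega) (by omega)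
          (by omega) (by omega))
        (fun x hx => hLyn x (List.mem_append_right _ hx)) (List.pairwise_append.1 hP).2.1
        (by rw [h3, hL2]) hu hup hub
      obtain ⟨g, rfl⟩ : ∃ g', g = g' + 1 := ⟨g - 1, by omega⟩
      refine ⟨g + 2, by omega, by omega, fun j => if j = 1 then u else u' (j - 1), ?_, ?_, ?_⟩
      · intro j hj1 hj2
        by_cases hj : j = 1
        · subst hj
          exact ⟨a, v, by simpa using h1.trans hluv, hab⟩
        · obtain ⟨c, v', hc1, hc2⟩ := hu1 (j - 1) (by omega) (by omega)
          refine ⟨c, v', ?_, hc2⟩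
          rw [Nat.sub_add_cancel hj1] at hc1
          simpa [hj] using hc1
      · rw [blocks_succ, h1, h2, List.append_assoc, hu2]
        simp
      · simpa using hu3

end Aux

/-- Lemma `bordo0`: if `z` is an anti-prenecklace, `z b` is not an anti-prenecklace and
`z b` is a prefix of `w`, where `CFL_in(w) = (ℓ₁^{n₁}, …, ℓ_h^{n_h})`, then
`z b = (u₁v₁)^{n₁} ⋯ (u_g v_g)^{n_g} u_g b` with `ℓ_j = u_j a_j v'_j`, `a_j < b`,
and `u_g b` an anti-prenecklace (here `ℓ`, `n`, `u` are indexed 1-based). -/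
theorem stmt3 {α : Type*} [LinearOrder α] (w : List α) (hw : w ≠ [])
    (hwn : ¬ IsInvLyndon w)
    (h : ℕ) (hh : 0 < h) (ℓ : ℕ → List α) (n : ℕ → ℕ)
    (hn : ∀ j, 1 ≤ j → j ≤ h → 1 ≤ n j)
    (hdist : ∀ j1 j2, 1 ≤ j1 → j1 ≤ h → 1 ≤ j2 → j2 ≤ h → j1 ≠ j2 → ℓ j1 ≠ ℓ j2)
    (hCFL : IsCFLWith invLt w
      (((List.range h).map (fun j => List.replicate (n (j+1)) (ℓ (j+1)))).flatten)) :
    ∀ (z : List α) (b : α), z ≠ [] →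
      IsAntiPrenecklace z → ¬ IsAntiPrenecklace (z ++ [b]) → (z ++ [b]) <+: w →
      ∃ g, 1 ≤ g ∧ g ≤ h ∧ ∃ u : ℕ → List α,
        (∀ j, 1 ≤ j → j ≤ g → ∃ (a : α) (v' : List α), ℓ j = u j ++ a :: v' ∧ a < b) ∧
        z ++ [b] =
          (((List.range g).map (fun j => List.replicate (n (j+1)) (ℓ (j+1)))).flatten).flatten
            ++ u g ++ [b] ∧
        IsAntiPrenecklace (u g ++ [b]) := by
  intro z b hz hzp hzb hpre
  obtain ⟨-, hflat, hLyn, hch⟩ := hCFL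
  obtain ⟨y, hy⟩ := hpre
  have : IsTrans (List α) fun x y => ¬ List.Lex invLt x y :=
    ⟨fun _ _ _ h1 h2 => not_lex_trans h1 h2⟩
  exact bordo_aux z.length z b y h ℓ n le_rfl hn hdist hLyn (List.isChain_iff_pairwise.1 hch)
    (by rw [hflat, ← hy]; simp) hz hzp hzb
end

section
/- Let w be a nonempty word over a totally ordered alphabet Σ that is not an inverse Lyndon word, and let (p, p̄) ∈ Pref_bre(w). Then for each nonempty border z of p, the words z and p̄ are incomparable for the prefix order: neither z is a prefix of p̄ nor p̄ is a prefix of z. -/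
/-!
Suppose `z` is a nonempty border of `p`, and write `p = z y`.

If `p̄` is a prefix of `z`, then it is a prefix of `p`, which contradicts `p ≺ p̄`.

If `z` is a proper prefix of `p̄`, write `p̄ = z t = q c` with `c` the last letter of `p̄`, so that
`q` is nonempty and `p q` is an inverse Lyndon word. Its proper suffix `z q` satisfies
`z q ≺ p q = z y q`, hence `q ≺ y q`. Cancelling `z` in `p ≪ p̄` gives `y ≪ t`, hence `y q ≺ t`.
Finally `t` is a proper suffix of the inverse Lyndon word `p̄`, so `t ≺ p̄ = q c`. Altogether
`q ≺ t ≺ q c` with `|t| ≤ |q|`. This is impossible, since every word strictly between `q` and `q c`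
has `q` as a proper prefix.
-/

open List

theorem lexLt_append_left_cancel {α : Type*} [LinearOrder α] (z x y : List α)
    (h : lexLt (z ++ x) (z ++ y)) : lexLt x y := by
  induction z with
  | nil => exact h
  | cons a z ih =>
    cases h with
    | cons h => exact ih h
    | rel h => exact absurd h (lt_irrefl a)

theorem not_lexLt_of_prefix {α : Type*} [LinearOrder α] (x y : List α) (h : y <+: x) :
    ¬ lexLt x y := by
  obtain ⟨t, rfl⟩ := h
  intro h
  have h' : lexLt t [] := lexLt_append_left_cancel y t [] (by simpa using h)
  cases h'

/-- A strict inequality decided by a mismatch of letters is unaffected by lengthening the smaller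
word. -/
theorem lexLt_append_of_not_prefix {α : Type*} [LinearOrder α] {x y : List α} (q : List α)
    (h : lexLt x y) (hp : ¬ x <+: y) : lexLt (x ++ q) y := by
  induction h with
  | nil => exact absurd (List.nil_prefix) hp
  | cons _ ih =>
    exact List.Lex.cons (ih fun h => hp (by simpa [List.cons_prefix_cons] using h))
  | rel h => exact List.Lex.rel h

theorem length_lt_of_lexLt_between {α : Type*} [LinearOrder α] (q t : List α) (c : α)
    (h₁ : lexLt q t) (h₂ : lexLt t (q ++ [c])) : q.length < t.length := by
  induction q generalizing t with
  | nil => cases h₁ with | nil => simp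
  | cons a q ih =>
    cases h₁ with
    | cons h₁ =>
      cases h₂ with
      | cons h₂ => simpa using ih _ h₁ h₂
      | rel h => exact absurd h (lt_irrefl a)
    | rel h =>
      cases h₂ with
      | cons h₂ => exact absurd h (lt_irrefl a)
      | rel h' => exact absurd h (lt_asymm h')

theorem lexLt_trans {α : Type*} [LinearOrder α] {x y z : List α}
    (h₁ : lexLt x y) (h₂ : lexLt y z) : lexLt x z :=
  lt_trans (α := List α) h₁ h₂

/-- Proposition `bordo-bre-paola`: for `(p, p̄) ∈ Pref_bre(w)`, every nonempty border `z`
of `p` is incomparable with `p̄` for the prefix order. -/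
theorem stmt5 {α : Type*} [LinearOrder α] (w : List α) (hw : w ≠ [])
    (hwn : ¬ IsInvLyndon w)
    (p pbar : List α) (hbre : IsBRE p pbar w)
    (z : List α) (hz : z ≠ []) (hzb : IsBorder z p) :
    ¬ z <+: pbar ∧ ¬ pbar <+: z := by
  obtain ⟨-, -, -, -, hne, hinv, hext, -, hlt, hnp⟩ := hbre
  obtain ⟨hzp, hzne, hzs⟩ := hzb
  have hnot : ¬ pbar <+: z := fun h => not_lexLt_of_prefix _ _ (h.trans hzp) hlt
  refine ⟨?_, hnot⟩
  intro hzpb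
  obtain ⟨q, c, rfl⟩ : ∃ q c, pbar = q ++ [c] :=
    ⟨pbar.dropLast, pbar.getLast hne, (List.dropLast_append_getLast hne).symm⟩
  have hzq : z <+: q := by
    rcases List.prefix_concat_iff.1 hzpb with h | h
    · exact absurd (h ▸ List.prefix_rfl) hnot
    · exact h
  have hq : q ≠ [] := by
    rintro rfl
    exact hz (List.prefix_nil.1 hzq)
  have hpq := hext q hq (by simp) (List.prefix_append _ _)
  obtain ⟨y, rfl⟩ := hzp
  obtain ⟨t, ht⟩ := hzpb
  have h₁ : lexLt q (y ++ q) := by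
    apply lexLt_append_left_cancel z
    rw [← List.append_assoc]
    refine hpq.2 _ (by simp [hz]) (fun h => hzne (List.append_cancel_right h)) ?_
    obtain ⟨x, hx⟩ := hzs
    exact ⟨x, by rw [← List.append_assoc, hx]⟩
  have h₂ : lexLt (y ++ q) t := by
    apply lexLt_append_of_not_prefix
    · exact lexLt_append_left_cancel z _ _ (ht ▸ hlt)
    · rintro ⟨u, rfl⟩
      exact hnp ⟨u, by rw [← ht, List.append_assoc]⟩
  have hlen := congrArg List.length ht
  have hzl := List.length_pos_iff.2 hz
  simp only [List.length_append, List.length_singleton] at hlen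
  have h₃ : lexLt t (q ++ [c]) := by
    refine hinv.2 t ?_ ?_ ⟨z, ht⟩
    · rintro rfl
      exact not_lexLt_of_prefix _ _ List.nil_prefix h₂
    · intro h
      have := congrArg List.length h
      simp only [List.length_append, List.length_singleton] at this
      omega
  have := length_lt_of_lexLt_between q t c (lexLt_trans h₁ h₂) h₃
  omega
end

section
/- Let w be a nonempty word over a totally ordered alphabet Σ that is not an inverse Lyndon word, and let ICFL(w) = (m1, …, mk). If z is a nonempty border of m1, then z is not a prefix of m2. -/
/-!
For `ICFL(w) = (m₁, m₂, …)`, a slightly stronger claim holds, by induction on the recursive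
definition: no nonempty word that is both a prefix and a suffix of `m₁` (possibly `m₁` itself) is a
prefix of `m₂`.

If `m₁ = p`, write `p = r a s` and `p̄ = r b t` with `a < b`, and let `z` be such a word. As `p̄` is
also a prefix of `m₂` and not one of `p`, the word `z` is a prefix of `p̄`, hence of `r`;
say `r = z r'`. Now `z r` is a suffix of the inverse Lyndon word `p r = z r' a s r`, whence
`r ≺ r' a s r`, and `r' b t` is a suffix of the inverse Lyndon word `p̄ = r b t`, whence
`r' b t ≺ r b t`. Since `r'` is shorter than `r`, these two force `b ≤ a` (`lex_conflict`).

If `m₁ = p m₁'` with `m₁'` a prefix of `r`, hence of `p`, then either `z` is shorter than `m₁'`, so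
it is a prefix and a suffix of `m₁'`, or `m₁'` is a prefix of `z` and therefore of `m₂`.
The induction hypothesis, for `z` or for `m₁'`, excludes both.
-/

open List

section Aux

variable {α : Type*} [LinearOrder α]

theorem not_lexLt_of_prefix_s6 {p q : List α} (h : q <+: p) : ¬ lexLt p q := by
  obtain ⟨t, rfl⟩ := h
  intro h
  induction q with
  | nil => cases h
  | cons c q ih =>
    cases h with
    | rel h => exact lt_irrefl _ h
    | cons h => exact ih h

theorem lexLt_append_cancel {z x y : List α} (h : lexLt (z ++ x) (z ++ y)) : lexLt x y := by
  induction z with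
  | nil => exact h
  | cons c z ih =>
    cases h with
    | rel h => exact absurd h (lt_irrefl _)
    | cons h => exact ih h

/-- The decomposition of `p ≪ q` at the first letter where the two words differ. -/
theorem exists_split {p q : List α} (h : lexLt p q) (hp : ¬ p <+: q) :
    ∃ (r s t : List α) (a b : α), p = r ++ a :: s ∧ q = r ++ b :: t ∧ a < b := by
  induction h with
  | nil => exact absurd (List.nil_prefix) hp
  | @cons c x y _ ih =>
    obtain ⟨r, s, t, a, b, rfl, rfl, hab⟩ := ih fun h => hp (by simpa using h)
    exact ⟨c :: r, s, t, a, b, rfl, rfl, hab⟩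
  | @rel a x b y hab => exact ⟨[], x, y, a, b, rfl, rfl, hab⟩

/-- Going through `r` and `r'` in parallel, the first hypothesis gives `r ≤ r'` letterwise and the
second the converse, so the words agree until `r'` ends; the next letter of `r` would then lie
between `b` and `a`. -/
theorem lex_conflict {a b : α} (hab : a < b) (X Y t : List α) :
    ∀ (r' r : List α), r'.length < r.length → lexLt r (r' ++ a :: X) →
      lexLt (r' ++ b :: t) (r ++ Y) → False := by
  intro r'
  induction r' with
  | nil =>
    rintro (_ | ⟨c, r⟩) hl h1 h2
    · simp at hl
    have hca : c ≤ a := by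
      cases h1 with
      | rel h => exact h.le
      | cons h => exact le_rfl
    have hbc : b ≤ c := by
      cases h2 with
      | rel h => exact h.le
      | cons h => exact le_rfl
    exact absurd hab (hbc.trans hca).not_gt
  | cons d r' ih =>
    rintro (_ | ⟨c, r⟩) hl h1 h2
    · simp at hl
    cases h1 with
    | rel h =>
      cases h2 with
      | rel h' => exact lt_asymm h h'
      | cons h' => exact lt_irrefl _ h
    | cons h =>
      cases h2 with
      | rel h' => exact lt_irrefl _ h'
      | cons h' => exact ih r (by simpa using hl) h h'

/-- The case where the first factor is `p` itself; `q` stands for the bounded right extension. -/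
theorem not_prefix_of_bre {w p q m z : List α} (hb : IsBRE p q w) (hq : q <+: m) (hz : z ≠ [])
    (hzp : z <+: p) (hzs : z <:+ p) : ¬ z <+: m := by
  intro hzm
  obtain ⟨-, -, -, -, -, hqL, hext, -, hlt, hnp⟩ := hb
  have hzq : z <+: q := by
    rcases List.prefix_or_prefix_of_prefix hzm hq with h | h
    · exact h
    · exact absurd hlt (not_lexLt_of_prefix_s6 (h.trans hzp))
  obtain ⟨r, s, t, a, b, rfl, rfl, hab⟩ := exists_split hlt hnp
  have hzr : z <+: r := by
    rcases List.prefix_or_prefix_of_prefix hzp (List.prefix_append r (a :: s)) with h | ⟨u, rfl⟩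
    · exact h
    · rw [List.prefix_append_right_inj] at hzp hzq
      cases u with
      | nil => simp
      | cons c u =>
        rw [List.cons_prefix_cons] at hzp hzq
        exact absurd (hzp.1.symm.trans hzq.1) hab.ne
  obtain ⟨r', rfl⟩ := hzr
  obtain ⟨x, hx⟩ := hzs
  have hzl : 0 < z.length := List.length_pos_iff.2 hz
  -- `z ++ r'` is now the common prefix of `p` and `q`; it is a proper prefix of `q`.
  have hpr := hext (z ++ r') (by simp [hz]) (by simp) (List.prefix_append _ _)
  have h1 := hpr.2 (z ++ (z ++ r')) (by simp [hz])
    (fun h => by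
      have := congrArg List.length h
      simp only [List.length_append, List.length_cons] at this
      omega)
    ⟨x, by rw [← hx]; simp⟩
  have h2 := hqL.2 (r' ++ b :: t) (by simp)
    (fun h => by
      have := congrArg List.length h
      simp only [List.length_append, List.length_cons] at this
      omega)
    ⟨z, by simp⟩
  refine lex_conflict hab (s ++ (z ++ r')) (b :: t) t r' (z ++ r') (by simp; omega) ?_ h2
  exact lexLt_append_cancel (z := z) (by simpa using h1)

/-- The strengthened claim carried through the recursion. Taking `z` to be all of the first factor
is what the grouping step needs, and there the first factor must be known to be nonempty. -/
theorem icfl_first_factor {w : List α} {M : List (List α)} (hM : IsICFL w M) :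
    ∀ m L, M = m :: L → m ≠ [] ∧ ∀ n L', L = n :: L' →
      ∀ z : List α, z ≠ [] → z <+: m → z <:+ m → ¬ z <+: n := by
  induction hM with
  | base w h =>
    rintro m L ⟨⟩
    exact ⟨h.1, by simp⟩
  | ext w p q v m1 ms _ hb _ _ hq _ =>
    rintro m L ⟨⟩
    refine ⟨hb.2.1, ?_⟩
    rintro n L' ⟨⟩ z hz h1 h2
    exact not_prefix_of_bre hb hq hz h1 h2
  | grp w p q v r a b s m1 ms _ hb _ hp _ _ _ hr ih =>
    rintro m L ⟨⟩
    obtain ⟨hne, ih⟩ := ih m1 ms rfl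
    refine ⟨by simp [hne], ?_⟩
    rintro n L' rfl z hz h1 h2 hzn
    have hmp : m1 <+: p ++ m1 :=
      hr.trans (by rw [hp]; simp [List.append_assoc])
    rcases List.prefix_or_prefix_of_prefix h1 hmp with h | h
    · exact ih n L' rfl z hz h
        (List.suffix_of_suffix_length_le h2 (List.suffix_append p m1) h.length_le) hzn
    · exact ih n L' rfl m1 hne List.prefix_rfl List.suffix_rfl (h.trans hzn)

end Aux


/-- Proposition `bordo2`: if `ICFL(w) = (m₁, …, m_k)` and `z` is a nonempty border of
`m₁`, then `z` is not a prefix of `m₂`. -/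
theorem stmt6 {α : Type*} [LinearOrder α] (w : List α) (hw : w ≠ [])
    (hwn : ¬ IsInvLyndon w)
    (M : List (List α)) (hM : IsICFL w M) (hlen : 1 < M.length)
    (z : List α) (hz : z ≠ []) (hzb : IsBorder z M[0]!) :
    ¬ z <+: M[1]! := by
  obtain _ | ⟨m, _ | ⟨n, L⟩⟩ := M
  · simp at hlen
  · simp at hlen
  · exact (icfl_first_factor hM m _ rfl).2 n L rfl z hz hzb.1 hzb.2.2
end

section
/- Let w be a nonempty word over a totally ordered alphabet Σ that is not an inverse Lyndon word, let ICFL(w) = (m1, …, mk), and consider the occurrence of the factor u = m_i m_{i+1} ⋯ m_h in w, where 1 ≤ i < h ≤ k. Let j1, j2 be positions with first(u) ≤ j1 ≤ last(u), first(u) ≤ j2 ≤ last(u), j1 ≠ j2, and suppose suf_u(j1) ≺ suf_u(j2). If suf_u(j1) is a proper prefix of suf_u(j2) and h < k, then suf(j2) ≺ suf(j1); otherwise suf(j1) ≺ suf(j2). -/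
/-!
Write `x ≪ y` when `x` and `y` first differ at a position inside both, the letter of `x` being
smaller; this relation survives arbitrary right extensions of both words.

The heart of the proof is the fact that, for consecutive factors `m, m'` of `ICFL(w)`, every
nonempty suffix `t` of `m` (not just `m` itself) satisfies `t ≪ m'` (`IsICFL.isChain`). It is
obtained by induction on the construction of `ICFL(w)` from the corresponding fact
`IsBRE.suffix_lexLL` on a prefix `p = r a s` and its bounded right extension `r b`. There the only
difficult suffixes `t` of `p` are the borders of `p` which are prefixes of `r`, say `r = t r'`;
comparing the suffix `t r` of the inverse Lyndon word `p r` with `p r`, and the suffix `r' b` of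
the inverse Lyndon word `r b` with `r b`, gives `r ≺ r' a s r ≺ r' b ≼ r`, which is absurd.
When the first factor `p` absorbs the factor `m₁`, a prefix of `r`, a suffix `t m₁` of `p m₁` is
compared with the following factor `m₂` by locating the mismatch of `t ≪ r b` inside or beyond
`m₁`.

By transitivity, every nonempty suffix `t` of `m₁ ⋯ m_h` satisfies `t ≪ z` with
`z = m_{h+1} ⋯ m_k`. If the local suffix `x` is a proper prefix of the local suffix `y = x t`, then
`t` is such a suffix, so `y z = x t z ≺ x z`. If `x` is not a prefix of `y`, then `x ≪ y`, and
hence `x z ≪ y z`. If `h = k`, local and global suffixes coincide.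
-/

open List

/-! ### Mismatches and the lexicographic order -/

/-- `x ≪ y` in explicit form: `x = r a s` and `y = r b s'` with letters `a < b`. -/
def LexLL {α : Type*} [LinearOrder α] (x y : List α) : Prop :=
  ∃ (r : List α) (a b : α) (s s' : List α), a < b ∧ x = r ++ a :: s ∧ y = r ++ b :: s'

section LexLL

variable {α : Type*} [LinearOrder α] {x y z : List α}

lemma LexLL.append (h : LexLL x y) (u v : List α) : LexLL (x ++ u) (y ++ v) := by
  obtain ⟨r, a, b, s, s', hab, rfl, rfl⟩ := h
  exact ⟨r, a, b, s ++ u, s' ++ v, hab, by simp, by simp⟩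

lemma LexLL.cons (c : α) (h : LexLL x y) : LexLL (c :: x) (c :: y) := by
  obtain ⟨r, a, b, s, s', hab, rfl, rfl⟩ := h
  exact ⟨c :: r, a, b, s, s', hab, rfl, rfl⟩

lemma LexLL.ne_nil_left (h : LexLL x y) : x ≠ [] := by
  obtain ⟨r, a, b, s, s', hab, rfl, rfl⟩ := h
  simp

lemma LexLL.lexLt (h : LexLL x y) : lexLt x y := by
  obtain ⟨r, a, b, s, s', hab, rfl, rfl⟩ := h
  exact List.Lex.append_left _ (List.Lex.rel hab) r

lemma lexLt_append_iff (r : List α) : lexLt (r ++ x) (r ++ y) ↔ lexLt x y := by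
  induction r with
  | nil => rfl
  | cons c r ih =>
    refine Iff.trans ⟨fun h => ?_, fun h => List.Lex.cons h⟩ ih
    cases h with
    | cons h => exact h
    | rel h => exact absurd h (lt_irrefl _)

lemma lexLt_trans_s8 (h : lexLt x y) (h' : lexLt y z) : lexLt x z :=
  lt_trans (show x < y from h) (show y < z from h')

lemma lexLt_irrefl (x : List α) : ¬ lexLt x x := lt_irrefl x

lemma lexLt.prefix_or_lexLL (h : lexLt x y) : x <+: y ∨ LexLL x y := by
  induction h with
  | nil => exact Or.inl (List.nil_prefix)
  | cons _ ih =>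
    refine ih.imp (fun h => ?_) (LexLL.cons _)
    simpa using h
  | rel hab => exact Or.inr ⟨[], _, _, _, _, hab, rfl, rfl⟩

/-- Compare the position of the mismatch between `x` and `y` with the end of `z`. -/
lemma LexLL.of_prefix_right (h : LexLL x y) (hz : z <+: y) : LexLL x z ∨ z <+: x := by
  obtain ⟨r, a, b, s, s', hab, rfl, rfl⟩ := h
  obtain ⟨e, he⟩ := hz
  rcases List.append_eq_append_iff.1 he with ⟨u, rfl, -⟩ | ⟨u, rfl, hu⟩
  · right; simp
  · cases u with
    | nil => right; simp
    | cons c u =>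
      obtain ⟨rfl, -⟩ := List.cons.inj hu
      exact Or.inl ⟨r, a, b, s, u, hab, rfl, rfl⟩

lemma LexLL.of_prefix_left (h : LexLL x y) (hz : z <+: x) : LexLL z y ∨ z <+: y := by
  obtain ⟨r, a, b, s, s', hab, rfl, rfl⟩ := h
  obtain ⟨e, he⟩ := hz
  rcases List.append_eq_append_iff.1 he with ⟨u, rfl, -⟩ | ⟨u, rfl, hu⟩
  · right; simp
  · cases u with
    | nil => right; simp
    | cons c u =>
      obtain ⟨rfl, -⟩ := List.cons.inj hu
      exact Or.inl ⟨r, a, b, u, s', hab, rfl, rfl⟩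

lemma LexLL.not_prefix (h : LexLL x y) : ¬ x <+: y := by
  rintro ⟨e, rfl⟩
  have := (h.append e []).lexLt
  rw [List.append_nil] at this
  exact lexLt_irrefl _ this

lemma LexLL.trans (h : LexLL x y) (h' : LexLL y z) : LexLL x z := by
  refine (lexLt_trans_s8 h.lexLt h'.lexLt).prefix_or_lexLL.resolve_left fun hp => ?_
  rcases h'.of_prefix_right hp with h1 | h1
  · exact lexLt_irrefl _ (lexLt_trans_s8 h.lexLt h1.lexLt)
  · exact h.not_prefix h1

/-- A word no longer than `x` does not see what follows `x`. -/
lemma lexLt_or_eq_of_length_le {u : List α} (h : lexLt y (x ++ u)) (hl : y.length ≤ x.length) :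
    lexLt y x ∨ y = x := by
  rcases h.prefix_or_lexLL with hp | hL
  · obtain ⟨e, rfl⟩ := List.prefix_of_prefix_length_le hp (List.prefix_append x u) hl
    cases e with
    | nil => right; simp
    | cons c e =>
      left
      have : lexLt (y ++ []) (y ++ c :: e) := (lexLt_append_iff y).2 List.Lex.nil
      simpa using this
  · rcases hL.of_prefix_right (List.prefix_append x u) with h1 | h1
    · exact Or.inl h1.lexLt
    · exact Or.inr (h1.eq_of_length_le hl).symm

end LexLL

/-! ### Suffixes of the factors of the canonical inverse Lyndon factorization -/

lemma suffix_append_cases {α : Type*} {t x y : List α} (h : t <:+ x ++ y) :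
    t <:+ y ∨ ∃ t', t = t' ++ y ∧ t' <:+ x := by
  obtain ⟨e, he⟩ := h
  rcases List.append_eq_append_iff.1 he with ⟨u, rfl, rfl⟩ | ⟨u, rfl, rfl⟩
  · exact Or.inr ⟨u, rfl, List.suffix_append _ _⟩
  · exact Or.inl (List.suffix_append _ _)

section ICFL

variable {α : Type*} [LinearOrder α]

/-- Every nonempty suffix of `p`, and not only `p`, is `≪` the bounded right extension of `p`. -/
lemma IsBRE.suffix_lexLL {p pbar w t : List α} (h : IsBRE p pbar w) (ht : t ≠ [])
    (hs : t <:+ p) : LexLL t pbar := by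
  obtain ⟨hp, hp0, -, -, -, hbar, hmin, -, hlt, hnp⟩ := h
  have hL : LexLL p pbar := hlt.prefix_or_lexLL.resolve_left hnp
  obtain ⟨r, a, b, s, s', hab, hpe, hbe⟩ := hL
  -- Minimality of `pbar`: already `p r b` is not an inverse Lyndon word.
  have hs' : s' = [] := by
    by_contra hs'
    have h1 : IsInvLyndon (p ++ (r ++ [b])) := by
      refine hmin _ (by simp) ?_ ⟨s', by simp [hbe]⟩
      rw [hbe]; simpa using Ne.symm hs'
    have h2 : lexLt (r ++ [b]) (p ++ (r ++ [b])) :=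
      h1.2 _ (by simp) (by simpa using hp0) (List.suffix_append _ _)
    have h3 : LexLL p (r ++ [b]) := ⟨r, a, b, s, [], hab, hpe, rfl⟩
    have h4 := (h3.append (r ++ [b]) []).lexLt
    rw [List.append_nil] at h4
    exact lexLt_irrefl _ (lexLt_trans_s8 h2 h4)
  subst hs'
  have hL : LexLL p pbar := ⟨r, a, b, s, [], hab, hpe, hbe⟩
  by_cases htp : t = p
  · rwa [htp]
  rcases (hp.2 t ht htp hs).prefix_or_lexLL with hpre | hLL
  swap
  · exact hLL.trans hL
  refine (hL.of_prefix_left hpre).resolve_right fun hpre' => ?_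
  -- The remaining case: `t` is a border of `p` and a prefix of `r`.
  have htr : t <+: r := by
    rw [hbe, List.prefix_concat_iff] at hpre'
    refine hpre'.resolve_left fun hte => ?_
    have h1 : LexLL p t := ⟨r, a, b, s, [], hab, hpe, hte⟩
    exact lexLt_irrefl _ (lexLt_trans_s8 h1.lexLt (hp.2 t ht htp hs))
  obtain ⟨r', rfl⟩ := htr
  have h1 : lexLt (t ++ r') (r' ++ a :: s ++ (t ++ r')) := by
    have hinv : IsInvLyndon (p ++ (t ++ r')) :=
      hmin _ (by simp [ht]) (by simp [hbe]) ⟨[b], by simp [hbe]⟩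
    have h2 : lexLt (t ++ (t ++ r')) (p ++ (t ++ r')) :=
      hinv.2 _ (by simp [ht]) (by simpa using htp) (List.suffix_append_self_iff.2 hs)
    rw [hpe, List.append_assoc t, List.append_assoc t, lexLt_append_iff] at h2
    exact h2
  have h2 : LexLL (r' ++ a :: s ++ (t ++ r')) (r' ++ [b]) :=
    ⟨r', a, b, s ++ (t ++ r'), [], hab, by simp, rfl⟩
  have h3 : lexLt (r' ++ [b]) (t ++ r' ++ [b]) := by
    rw [← hbe]
    exact hbar.2 _ (by simp) (by simp [hbe, ht]) ⟨t, by simp [hbe]⟩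
  have hlen : (r' ++ [b]).length ≤ (t ++ r').length := by
    have := List.length_pos_iff.2 ht
    simp; omega
  have h4 := lexLt_trans_s8 h1 h2.lexLt
  rcases lexLt_or_eq_of_length_le h3 hlen with h5 | h5
  · exact lexLt_irrefl _ (lexLt_trans_s8 h4 h5)
  · rw [h5] at h4; exact lexLt_irrefl _ h4

lemma IsICFL.flatten {w : List α} {M : List (List α)} (h : IsICFL w M) : M.flatten = w := by
  induction h with
  | base w _ => simp
  | ext w p pbar v m1 ms _ _ hw _ _ ih => rw [hw, ← ih]; simp
  | grp w p pbar v r a b s m1 ms _ _ hw _ _ _ _ _ ih => rw [hw, ← ih]; simp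

/-- `m` is nonempty, and every nonempty suffix of `m` is `≪ m'`. -/
def SuffixesLexLL (m m' : List α) : Prop :=
  m ≠ [] ∧ ∀ t, t ≠ [] → t <:+ m → LexLL t m'

instance : IsTrans (List α) SuffixesLexLL where
  trans _ b _ h h' :=
    ⟨h.1, fun t ht hs => (h.2 t ht hs).trans (h'.2 b h'.1 List.suffix_rfl)⟩

/-- Consecutive factors `m, m'` of `ICFL(w)`: every nonempty suffix of `m` is `≪ m'`. -/
lemma IsICFL.isChain {w : List α} {M : List (List α)} (h : IsICFL w M) :
    M.IsChain SuffixesLexLL := by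
  induction h with
  | base w _ => simp
  | ext w p pbar v m1 ms _ hbre _ _ hpre ih =>
    refine List.isChain_cons_cons.2 ⟨⟨hbre.2.1, fun t ht hs => ?_⟩, ih⟩
    obtain ⟨e, rfl⟩ := hpre
    simpa using (hbre.suffix_lexLL ht hs).append [] e
  | grp w p pbar v r a b s m1 ms _ hbre _ _ hbe _ _ hpre ih =>
    cases ms with
    | nil => simp
    | cons m2 ms =>
      rw [List.isChain_cons_cons] at ih ⊢
      obtain ⟨⟨hm1, hsuf⟩, ih⟩ := ih
      refine ⟨⟨by simp [hm1], fun t ht hs => ?_⟩, ih⟩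
      rcases suffix_append_cases hs with hs | ⟨t', rfl, hs'⟩
      · exact hsuf t ht hs
      by_cases ht' : t' = []
      · subst ht'
        exact hsuf _ ht List.suffix_rfl
      have h12 : LexLL m1 m2 := hsuf m1 hm1 List.suffix_rfl
      have h1 : LexLL t' pbar := hbre.suffix_lexLL ht' hs'
      have hpre' : m1 <+: pbar := hbe ▸ hpre.trans (List.prefix_append _ _)
      -- Either the mismatch of `t'` with `pbar` lies inside `m1`, or `m1` is a prefix of `t'`.
      rcases h1.of_prefix_right hpre' with h2 | ⟨e, rfl⟩
      · simpa using (h2.trans h12).append m1 []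
      · simpa using h12.append (e ++ m1) []

/-- The relation `≪ m` holds for every nonempty suffix of the product of all factors preceding
`m`, including the suffixes that straddle several factors. -/
lemma lexLL_of_suffix_flatten {A B : List (List α)} {m t : List α}
    (h : (A ++ m :: B).Pairwise SuffixesLexLL) (ht : t ≠ []) (hs : t <:+ A.flatten) :
    LexLL t m := by
  induction A generalizing t with
  | nil => exact absurd (by simpa using hs) ht
  | cons c A ih =>
    rw [List.cons_append, List.pairwise_cons] at h
    rw [List.flatten_cons] at hs
    rcases suffix_append_cases hs with hs | ⟨t', rfl, hs'⟩
    · exact ih h.2 ht hs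
    by_cases ht' : t' = []
    · subst ht'
      exact ih h.2 ht List.suffix_rfl
    simpa using ((h.1 m (by simp)).2 t' ht' hs').append A.flatten []

end ICFL

/-! ### Local and global suffixes -/

/-- Proposition `compatibility-order-inverse-factorization`: compatibility, for `≺`, of
the sorting of local suffixes of `w` w.r.t. `u = m_i ⋯ m_h` with the sorting of the
corresponding global suffixes. Indices `i`, `h` are the 0-based positions of `m_i`,
`m_h` in `ICFL(w) = M`; the occurrence of `u` in `w = M.flatten` starts at position
`((M.take i).flatten).length`, a local suffix at position `j` is
`((M.take (h+1)).flatten).drop j` and the global one is `w.drop j`. -/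
theorem stmt8 {α : Type*} [LinearOrder α] (w : List α) (hw : w ≠ [])
    (hwn : ¬ IsInvLyndon w)
    (M : List (List α)) (hM : IsICFL w M)
    (i h : ℕ) (hih : i < h) (hhk : h < M.length)
    (j1 j2 : ℕ)
    (hj1l : ((M.take i).flatten).length ≤ j1) (hj1r : j1 < ((M.take (h+1)).flatten).length)
    (hj2l : ((M.take i).flatten).length ≤ j2) (hj2r : j2 < ((M.take (h+1)).flatten).length)
    (hne : j1 ≠ j2)
    (hlt : lexLt (((M.take (h+1)).flatten).drop j1) (((M.take (h+1)).flatten).drop j2)) :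
    ((((M.take (h+1)).flatten).drop j1 <+: ((M.take (h+1)).flatten).drop j2 ∧
        ((M.take (h+1)).flatten).drop j1 ≠ ((M.take (h+1)).flatten).drop j2 ∧
        h + 1 < M.length) →
      lexLt (w.drop j2) (w.drop j1)) ∧
    (¬ (((M.take (h+1)).flatten).drop j1 <+: ((M.take (h+1)).flatten).drop j2 ∧
        ((M.take (h+1)).flatten).drop j1 ≠ ((M.take (h+1)).flatten).drop j2 ∧
        h + 1 < M.length) →
      lexLt (w.drop j1) (w.drop j2)) := by
  have hw' := hM.flatten
  have hpair := List.isChain_iff_pairwise.1 hM.isChain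
  set P := (M.take (h + 1)).flatten with hP
  set z := (M.drop (h + 1)).flatten with hz
  have hwz : w = P ++ z := by
    rw [← hw', hP, hz, ← List.flatten_append, List.take_append_drop]
  have hd1 : w.drop j1 = P.drop j1 ++ z := by rw [hwz, List.drop_append_of_le_length hj1r.le]
  have hd2 : w.drop j2 = P.drop j2 ++ z := by rw [hwz, List.drop_append_of_le_length hj2r.le]
  rw [hd1, hd2]
  refine ⟨?_, fun hno => ?_⟩
  · rintro ⟨⟨t, ht⟩, hxy, hlen⟩
    have ht0 : t ≠ [] := by
      rintro rfl
      exact hxy (by simpa using ht)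
    have hts : t <:+ P := (ht ▸ List.suffix_append _ _ : t <:+ P.drop j2).trans
      (List.drop_suffix _ _)
    have hsplit : M.drop (h + 1) = M[h + 1] :: M.drop (h + 2) := List.drop_eq_getElem_cons hlen
    have hLL : LexLL t M[h + 1] := by
      refine lexLL_of_suffix_flatten (B := M.drop (h + 2)) ?_ ht0 hts
      rwa [← hsplit, List.take_append_drop]
    have hz' : z = M[h + 1] ++ (M.drop (h + 2)).flatten := by
      rw [hz, hsplit, List.flatten_cons]
    have h1 : LexLL (t ++ z) z := by
      have := hLL.append z (M.drop (h + 2)).flatten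
      rwa [← hz'] at this
    rw [← ht, List.append_assoc, lexLt_append_iff]
    exact h1.lexLt
  · rcases hlt.prefix_or_lexLL with hp | hL
    · -- Here `h` is the last index, so nothing follows the local suffixes.
      have hlen : ¬ h + 1 < M.length := fun hlen =>
        hno ⟨hp, fun he => lexLt_irrefl _ (he ▸ hlt), hlen⟩
      have hz0 : z = [] := by
        rw [hz, List.drop_eq_nil_of_le (not_lt.1 hlen), List.flatten_nil]
      simpa [hz0] using hlt
    · exact (hL.append z z).lexLt
end

section
/- Let w be a nonempty word over a totally ordered alphabet Σ that is not an inverse Lyndon word, and let ICFL(w) = (m1, …, mk). Let i, h, j be integers with 1 ≤ i < h < j ≤ k, and suppose m_i = r_i a_i s_i, m_h = r_h a_h s_h, m_j = r_i b_i t_i = r_h b_h t_h, where a_i, b_i, a_h, b_h are letters with a_i < b_i and a_h < b_h, and r_i, s_i, t_i, r_h, s_h, t_h are words. Then r_i is a prefix of r_h. -/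
/-!
Suppose `rᵢ` is not a prefix of `r_h`. Both words are prefixes of `m_j`, so `r_h` is a proper
prefix of `rᵢ` and the letter following it in `rᵢ`, hence in `m_i`, is `b_h`. Since `m_h` starts
with `r_h a_h` and `a_h < b_h`, this gives `m_h ≺ m_i`. It contradicts the fact that the factors of
`ICFL(w)` satisfy `m₁ ≪ m₂ ≪ ⋯ ≪ m_k` (`isChain_of_isICFL`), which follows by induction on the
construction: `≪` is decided at the first mismatch, so it survives lengthening either word.
-/

open List

/-- `x ≪ y` in its explicit form: `x = r a s` and `y = r b t` with letters `a < b`. -/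
def StrictlyBelow {α : Type*} [LinearOrder α] (x y : List α) : Prop :=
  ∃ (r s t : List α) (a b : α), a < b ∧ x = r ++ a :: s ∧ y = r ++ b :: t

theorem strictlyBelow_of_lexLtLt {α : Type*} [LinearOrder α] {x y : List α}
    (hxy : lexLt x y) (hp : ¬ x <+: y) : StrictlyBelow x y := by
  unfold lexLt at hxy
  induction hxy with
  | nil => exact absurd List.nil_prefix hp
  | rel hab => exact ⟨[], _, _, _, _, hab, rfl, rfl⟩
  | @cons c x y _ ih =>
    obtain ⟨r, s, t, a, b, hab, rfl, rfl⟩ := ih fun h => hp (by simpa using h)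
    exact ⟨c :: r, s, t, a, b, hab, rfl, rfl⟩

theorem StrictlyBelow.of_prefix {α : Type*} [LinearOrder α] {x y x' y' : List α}
    (hxy : StrictlyBelow x y) (hx : x <+: x') (hy : y <+: y') : StrictlyBelow x' y' := by
  obtain ⟨r, s, t, a, b, hab, rfl, rfl⟩ := hxy
  obtain ⟨u, rfl⟩ := hx
  obtain ⟨v, rfl⟩ := hy
  exact ⟨r, s ++ u, t ++ v, a, b, hab, by simp, by simp⟩

theorem StrictlyBelow.lt {α : Type*} [LinearOrder α] {x y : List α}
    (hxy : StrictlyBelow x y) : x < y := by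
  obtain ⟨r, s, t, a, b, hab, rfl, rfl⟩ := hxy
  induction r with
  | nil => exact List.Lex.rel hab
  | cons c r ih => exact List.Lex.cons ih

/-- The factors of `ICFL(w)` satisfy `m₁ ≪ m₂ ≪ ⋯ ≪ m_k`. -/
theorem isChain_of_isICFL {α : Type*} [LinearOrder α] {w : List α} {M : List (List α)}
    (hM : IsICFL w M) : M.IsChain StrictlyBelow := by
  induction hM with
  | base w _ => simp
  | ext w p pbar v m1 ms _ hbre _ _ hpre ih =>
    obtain ⟨-, -, -, -, -, -, -, -, hlt, hnp⟩ := hbre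
    exact ih.cons_cons ((strictlyBelow_of_lexLtLt hlt hnp).of_prefix (List.prefix_refl _) hpre)
  | grp w p pbar v r a b s m1 ms _ _ _ hp _ _ _ hpre ih =>
    -- `m1` is a prefix of `r`, hence of `p`, so `p ++ m1` extends `m1` on the right.
    have hm : m1 <+: p ++ m1 := by
      subst hp
      exact hpre.trans (by simp [List.append_assoc])
    cases ms with
    | nil => simp
    | cons m2 ms =>
      rw [List.isChain_cons_cons] at ih ⊢
      exact ⟨ih.1.of_prefix hm (List.prefix_refl _), ih.2⟩

/-- Lemma `preliminary-zero`: with `ICFL(w) = (m₁, …, m_k)`, `i < h < j` (0-based),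
`m_i = rᵢ aᵢ sᵢ`, `m_h = r_h a_h s_h`, `m_j = rᵢ bᵢ tᵢ = r_h b_h t_h`, `aᵢ < bᵢ`,
`a_h < b_h`, the word `rᵢ` is a prefix of `r_h`. -/
theorem stmt10 {α : Type*} [LinearOrder α] (w : List α) (hw : w ≠ [])
    (hwn : ¬ IsInvLyndon w)
    (M : List (List α)) (hM : IsICFL w M)
    (i h j : ℕ) (hih : i < h) (hhj : h < j) (hjk : j < M.length)
    (ri si ti rh sh th : List α) (ai bi ah bh : α)
    (hmi : M[i]! = ri ++ ai :: si) (hmh : M[h]! = rh ++ ah :: sh)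
    (hmj1 : M[j]! = ri ++ bi :: ti) (hmj2 : M[j]! = rh ++ bh :: th)
    (hab1 : ai < bi) (hab2 : ah < bh) :
    ri <+: rh := by
  have hi : i < M.length := by omega
  have hh : h < M.length := by omega
  have hlt : M[i] < M[h] := by
    have hc : M.IsChain (· < ·) := (isChain_of_isICFL hM).imp fun _ _ hxy => hxy.lt
    exact List.pairwise_iff_getElem.mp (List.isChain_iff_pairwise.mp hc) i h hi hh hih
  rw [getElem!_pos M i hi] at hmi
  rw [getElem!_pos M h hh] at hmh
  have hri : ri <+: M[j]! := ⟨bi :: ti, hmj1.symm⟩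
  have hrh : rh ++ [bh] <+: M[j]! := ⟨th, by simp [hmj2]⟩
  by_contra hcon
  have hlen : rh.length < ri.length := by
    by_contra hle
    exact hcon (List.prefix_of_prefix_length_le hri
      ((List.prefix_append rh [bh]).trans hrh) (by omega))
  obtain ⟨u, hu⟩ := List.prefix_of_prefix_length_le hrh hri (by simpa using hlen)
  have hgt : StrictlyBelow M[h] M[i] :=
    ⟨rh, sh, u ++ ai :: si, ah, bh, hab2, hmh, by rw [hmi, ← hu]; simp⟩
  exact lt_asymm hlt hgt.lt
end
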